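/- arXiv:2503.18448 — 6 statements merged into one kernel-verified Lean document; each statement's English description precedes it below -/
import Mathlib

section
/- There exists a function F : ℂ → ℂ, holomorphic on all of ℂ, such that for every complex s with Re(s) > 1 one has F(s) = Σ_{n=A}^∞ χ(n)·P'(n)/P(n)^s. (That is, the Dirichlet-like series L_{A,χ,P} has a holomorphic continuation to the whole complex plane.) -/
/-!
A mean-zero periodic sequence `c` is the forward difference of another one, `C`, so summation by
parts turns `∑ c(n) a(n)` into `-C(0) a(0) - ∑ C(n + 1) Δa(n)`, and the step can be repeated.
For `a(n) = Q(n) P(n)^(-s)` every difference gains a factor `1 / n`: as a function of a complex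
variable `z`, `Q(z) P(z)^(-s)` is holomorphic and of size `‖z‖ ^ (deg Q - deg P * Re s)` on a thin
sector around the positive real axis, which contains discs of radius proportional to `‖z‖`, and the
Schwarz lemma on such a disc bounds the difference over a unit step. After `k` steps the series
converges locally uniformly for `Re s > (deg Q + 1 - k) / deg P`, and the continuations to these
half-planes agree by the identity theorem.
-/

open Filter Topology Asymptotics Bornology Metric
open scoped fwdDiff Polynomial

/-- The filter `z → ∞` along the positive real direction: `‖z‖ → ∞` and `z / ‖z‖ → 1`, so a
property holds eventually if it holds far out in some thin sector around the positive real axis. -/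
noncomputable def positiveSector : Filter ℂ :=
  cobounded ℂ ⊓ comap (fun z ↦ z / (‖z‖ : ℂ)) (𝓝 1)

lemma positiveSector_le_cobounded : positiveSector ≤ cobounded ℂ := inf_le_left

lemma tendsto_div_norm_positiveSector :
    Tendsto (fun z : ℂ ↦ z / (‖z‖ : ℂ)) positiveSector (𝓝 1) :=
  tendsto_comap.mono_left inf_le_right

lemma tendsto_norm_positiveSector : Tendsto (fun z : ℂ ↦ ‖z‖) positiveSector atTop :=
  tendsto_norm_cobounded_atTop.mono_left positiveSector_le_cobounded

lemma tendsto_natCast_positiveSector : Tendsto ((↑) : ℕ → ℂ) atTop positiveSector := by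
  refine tendsto_inf.2 ⟨tendsto_norm_atTop_iff_cobounded.1 ?_, tendsto_comap_iff.2 ?_⟩
  · simpa using tendsto_natCast_atTop_atTop (R := ℝ)
  · refine tendsto_const_nhds.congr' ?_
    filter_upwards [eventually_ne_atTop 0] with n hn
    simp [hn]

lemma tendsto_mul_positiveSector :
    Tendsto (fun p : ℂ × ℂ ↦ p.1 * p.2) (positiveSector ×ˢ 𝓝 1) positiveSector := by
  refine tendsto_inf.2 ⟨tendsto_norm_atTop_iff_cobounded.1 ?_, tendsto_comap_iff.2 ?_⟩
  · simpa only [norm_mul, Function.comp_def] using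
      (tendsto_norm_positiveSector.comp tendsto_fst).atTop_mul_pos (C := ‖(1 : ℂ)‖) (by simp)
        tendsto_snd.norm
  · have hdir : Tendsto (fun w : ℂ ↦ w / (‖w‖ : ℂ)) (𝓝 1) (𝓝 1) := by
      simpa [ContinuousAt] using
        (by fun_prop (disch := simp) : ContinuousAt (fun w : ℂ ↦ w / (‖w‖ : ℂ)) 1)
    have := (tendsto_div_norm_positiveSector.comp tendsto_fst).mul (hdir.comp tendsto_snd)
    simpa [Function.comp_def, mul_div_mul_comm] using this

/-- The functions `f i` are holomorphic and `O(‖z‖ ^ e)` in thin sectors around the positive real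
axis, uniformly in the parameter `i` along `l`. Holomorphy on a sector is encoded as
differentiability at each of its points. -/
structure IsSectorialBigO {ι : Type*} (l : Filter ι) (f : ι → ℂ → ℂ) (e : ℝ) : Prop where
  eventually_differentiableAt : ∀ᶠ p in positiveSector ×ˢ l, DifferentiableAt ℂ (f p.2) p.1
  isBigO : (fun p : ℂ × ι ↦ f p.2 p.1) =O[positiveSector ×ˢ l] fun p ↦ ‖p.1‖ ^ e

namespace IsSectorialBigO

variable {ι : Type*} {l : Filter ι} {f g : ι → ℂ → ℂ} {e e' : ℝ}

lemma mul (hf : IsSectorialBigO l f e) (hg : IsSectorialBigO l g e') :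
    IsSectorialBigO l (fun i z ↦ f i z * g i z) (e + e') where
  eventually_differentiableAt := by
    filter_upwards [hf.eventually_differentiableAt, hg.eventually_differentiableAt] with p h h'
    exact h.mul h'
  isBigO := by
    refine (hf.isBigO.mul hg.isBigO).congr' .rfl ?_
    filter_upwards [(tendsto_norm_positiveSector.comp tendsto_fst).eventually_gt_atTop 0]
      with p hp
    exact (Real.rpow_add hp _ _).symm

lemma exists_eventually_forall_mem_ball (hf : IsSectorialBigO l f e) :
    ∃ ε > 0, ∃ C > 0, ∀ᶠ p in positiveSector ×ˢ l, ∀ z ∈ ball p.1 (ε * ‖p.1‖),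
      DifferentiableAt ℂ (f p.2) z ∧ ‖f p.2 z‖ ≤ C * ‖p.1‖ ^ e := by
  have hdil : Tendsto (fun p : (ℂ × ι) × ℂ ↦ (p.1.1 * p.2, p.1.2))
      ((positiveSector ×ˢ l) ×ˢ 𝓝 1) (positiveSector ×ˢ l) :=
    (tendsto_mul_positiveSector.comp
      ((tendsto_fst.comp tendsto_fst).prodMk tendsto_snd)).prodMk (tendsto_snd.comp tendsto_fst)
  have hrpow : (fun p : (ℂ × ι) × ℂ ↦ ‖p.1.1 * p.2‖ ^ e)
      =O[(positiveSector ×ˢ l) ×ˢ 𝓝 1] fun p ↦ ‖p.1.1‖ ^ e := by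
    have hw : (fun p : (ℂ × ι) × ℂ ↦ ‖p.2‖ ^ e) =O[(positiveSector ×ˢ l) ×ˢ 𝓝 1]
        fun _ ↦ (1 : ℝ) :=
      ((tendsto_snd.norm.rpow_const (Or.inl (by simp))).isBigO_one ℝ)
    simpa [Real.mul_rpow, norm_nonneg] using
      (isBigO_refl (fun p : (ℂ × ι) × ℂ ↦ ‖p.1.1‖ ^ e) _).mul hw
  obtain ⟨C, hC, hbound⟩ := ((hf.isBigO.comp_tendsto hdil).trans hrpow).exists_pos
  obtain ⟨A, hA, B, hB, hAB⟩ := eventually_prod_iff.1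
    ((hdil.eventually hf.eventually_differentiableAt).and hbound.bound)
  obtain ⟨ε, hε, hball⟩ := Metric.eventually_nhds_iff_ball.1 hB
  refine ⟨ε, hε, C, hC, ?_⟩
  filter_upwards [hA, tendsto_fst.eventually (tendsto_norm_positiveSector.eventually_gt_atTop 0)]
    with p hp hpos z hz
  have hp0 : p.1 ≠ 0 := norm_pos_iff.1 hpos
  have hw : z / p.1 ∈ ball (1 : ℂ) ε := by
    rw [mem_ball, dist_eq_norm] at hz ⊢
    rwa [div_sub_one hp0, norm_div, div_lt_iff₀ hpos]
  simpa [mul_div_cancel₀ _ hp0, abs_of_nonneg (Real.rpow_nonneg _ _)] using hAB hp (hball _ hw)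

protected lemma fwdDiff (hf : IsSectorialBigO l f e) :
    IsSectorialBigO l (fun i ↦ Δ_[1] (f i)) (e - 1) := by
  obtain ⟨ε, hε, C, hC, hball⟩ := hf.exists_eventually_forall_mem_ball
  have hlarge : ∀ᶠ p : ℂ × ι in positiveSector ×ˢ l, 1 < ε * ‖p.1‖ :=
    ((tendsto_norm_positiveSector.comp tendsto_fst).const_mul_atTop hε).eventually_gt_atTop 1
  refine ⟨?_, .of_bound (2 * C / ε) ?_⟩
  · filter_upwards [hball, hlarge] with p hp hp1
    refine DifferentiableAt.sub ?_ (hp _ (mem_ball_self (one_pos.trans hp1))).1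
    exact differentiableAt_comp_add_const.2 (hp _ (by simpa)).1
  · filter_upwards [hball, hlarge] with p hp hp1
    have hpos : 0 < ‖p.1‖ := pos_of_mul_pos_right (one_pos.trans hp1) hε.le
    have hself := (hp p.1 (mem_ball_self (one_pos.trans hp1))).2
    have hmaps : Set.MapsTo (f p.2) (ball p.1 (ε * ‖p.1‖))
        (closedBall (f p.2 p.1) (2 * (C * ‖p.1‖ ^ e))) := fun z hz ↦ by
      rw [mem_closedBall, dist_eq_norm]
      linarith [norm_sub_le (f p.2 z) (f p.2 p.1), (hp z hz).2]
    have hschwarz := Complex.dist_le_div_mul_dist_of_mapsTo_ball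
      (fun z hz ↦ (hp z hz).1.differentiableWithinAt) hmaps (z := p.1 + 1) (by simpa)
    calc ‖Δ_[1] (f p.2) p.1‖ ≤ 2 * (C * ‖p.1‖ ^ e) / (ε * ‖p.1‖) := by
          simpa [fwdDiff, dist_eq_norm] using hschwarz
      _ = 2 * C / ε * ‖‖p.1‖ ^ (e - 1)‖ := by
          rw [Real.norm_of_nonneg (by positivity), Real.rpow_sub_one hpos.ne']
          field_simp

lemma fwdDiff_iter (hf : IsSectorialBigO l f e) (k : ℕ) :
    IsSectorialBigO l (fun i ↦ (Δ_[1])^[k] (f i)) (e - k) := by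
  induction k with
  | zero => simpa using hf
  | succ k ih =>
    simpa only [Function.iterate_succ_apply', Nat.cast_succ, sub_add_eq_sub_sub] using ih.fwdDiff

end IsSectorialBigO

lemma tendsto_eval_div_norm_pow_positiveSector (P : ℂ[X]) :
    Tendsto (fun z ↦ P.eval z / (‖z‖ : ℂ) ^ P.natDegree) positiveSector (𝓝 P.leadingCoeff) := by
  have hequiv := (P.isEquivalent_cobounded_leading_monomial.mono positiveSector_le_cobounded).div
    (IsEquivalent.refl (u := fun z : ℂ ↦ (‖z‖ : ℂ) ^ P.natDegree))
  refine hequiv.symm.tendsto_nhds ?_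
  have := (tendsto_div_norm_positiveSector.pow P.natDegree).const_mul P.leadingCoeff
  simpa [div_pow, mul_div_assoc, Pi.div_def] using this

lemma eventually_eval_mem_slitPlane {P : ℂ[X]} (hP : P.leadingCoeff ∈ Complex.slitPlane) :
    ∀ᶠ z in positiveSector, P.eval z ∈ Complex.slitPlane := by
  filter_upwards [(tendsto_eval_div_norm_pow_positiveSector P).eventually_mem
      (Complex.isOpen_slitPlane.mem_nhds hP),
    tendsto_norm_positiveSector.eventually_gt_atTop 0] with z hz hpos
  have hpow : 0 < ‖z‖ ^ P.natDegree := by positivity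
  rw [← Complex.ofReal_pow, Complex.mem_slitPlane_iff, Complex.div_ofReal_re,
    Complex.div_ofReal_im] at hz
  exact hz.imp (fun h ↦ (div_pos_iff_of_pos_right hpow).1 h) fun h ↦ (div_ne_zero_iff.1 h).1

lemma isTheta_eval_norm_rpow {P : ℂ[X]} (hP : P ≠ 0) :
    P.eval =Θ[cobounded ℂ] fun z ↦ ‖z‖ ^ (P.natDegree : ℝ) := by
  refine P.isEquivalent_cobounded_leading_monomial.isTheta.trans ?_
  simpa using
    ((isTheta_refl (fun z : ℂ ↦ z ^ P.natDegree) (cobounded ℂ)).norm_right.const_mul_left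
      (Polynomial.leadingCoeff_ne_zero.2 hP))

lemma isSectorialBigO_eval {ι : Type*} (l : Filter ι) (Q : ℂ[X]) :
    IsSectorialBigO l (fun _ ↦ Q.eval) Q.natDegree where
  eventually_differentiableAt := .of_forall fun p ↦ Q.differentiable p.1
  isBigO := by
    rcases eq_or_ne Q 0 with rfl | hQ
    · simpa using isBigO_zero (E' := ℂ) (fun _ : ℂ × ι ↦ (1 : ℝ)) (positiveSector ×ˢ l)
    · exact (isTheta_eval_norm_rpow hQ).isBigO.comp_tendsto
        (tendsto_fst.mono_right positiveSector_le_cobounded)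

lemma isSectorialBigO_eval_cpow_neg {P : ℂ[X]} (hdeg : 0 < P.natDegree)
    (hP : P.leadingCoeff ∈ Complex.slitPlane) {s : ℂ} {α : ℝ} (hα : α < s.re) :
    IsSectorialBigO (𝓝 s) (fun t z ↦ P.eval z ^ (-t)) (-(P.natDegree * α)) where
  eventually_differentiableAt := by
    filter_upwards [tendsto_fst.eventually (eventually_eval_mem_slitPlane hP)] with p hp
    exact P.differentiableAt.cpow_const hp
  isBigO := by
    have hfst : Tendsto Prod.fst (positiveSector ×ˢ 𝓝 s) (cobounded ℂ) :=
      tendsto_fst.mono_right positiveSector_le_cobounded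
    have hlarge : ∀ᶠ p in positiveSector ×ˢ 𝓝 s, 1 ≤ ‖P.eval p.1‖ :=
      ((P.tendsto_norm_atTop (Polynomial.natDegree_pos_iff_degree_pos.1 hdeg)
        (tendsto_norm_cobounded_atTop)).comp hfst).eventually_ge_atTop 1
    calc (fun p : ℂ × ℂ ↦ P.eval p.1 ^ (-p.2))
        =O[positiveSector ×ˢ 𝓝 s] fun p ↦ ‖P.eval p.1‖ ^ (-p.2).re :=
          Complex.isBigO_cpow_rpow
            ((Complex.continuous_im.tendsto _).comp tendsto_snd.neg).abs.isBoundedUnder_le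
      _ =O[positiveSector ×ˢ 𝓝 s] fun p ↦ ‖P.eval p.1‖ ^ (-α) := by
          refine .of_bound 1 ?_
          filter_upwards [hlarge, tendsto_snd.eventually
            (Complex.continuous_re.continuousAt.eventually_const_lt hα)] with p hp hre
          simp only [Real.norm_eq_abs, Real.abs_rpow_of_nonneg (norm_nonneg _), abs_norm, one_mul]
          exact Real.rpow_le_rpow_of_exponent_le hp (neg_le_neg hre.le)
      _ =O[positiveSector ×ˢ 𝓝 s] fun p ↦ (‖p.1‖ ^ (P.natDegree : ℝ)) ^ (-α) :=
          ((isTheta_eval_norm_rpow (Polynomial.ne_zero_of_natDegree_gt hdeg)).norm_left.rpow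
            (.of_forall fun _ ↦ norm_nonneg _)
            (.of_forall fun _ ↦ by positivity)).isBigO.comp_tendsto hfst
      _ = fun p ↦ ‖p.1‖ ^ (-(P.natDegree * α)) := by
          simp only [← Real.rpow_mul (norm_nonneg _), mul_neg]

/-- The sequence `c` is periodic with period `N > 0` and its sum over a period vanishes. -/
structure IsMeanZeroPeriodic (N : ℕ) (c : ℕ → ℂ) : Prop where
  pos : 0 < N
  periodic : Function.Periodic c N
  sum_range_eq_zero : ∑ i ∈ Finset.range N, c i = 0

namespace IsMeanZeroPeriodic

variable {N : ℕ} {c : ℕ → ℂ}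

lemma isBigO_one (hc : IsMeanZeroPeriodic N c) (l : Filter ℕ) : c =O[l] fun _ ↦ (1 : ℝ) := by
  refine .of_bound (∑ i ∈ Finset.range N, ‖c i‖) (.of_forall fun n ↦ ?_)
  rw [norm_one, mul_one, ← hc.periodic.map_mod_nat n]
  exact Finset.single_le_sum (f := fun i ↦ ‖c i‖) (fun _ _ ↦ norm_nonneg _)
    (Finset.mem_range.2 (n.mod_lt hc.pos))

lemma shift_one (hc : IsMeanZeroPeriodic N c) : IsMeanZeroPeriodic N fun n ↦ c (n + 1) where
  pos := hc.pos
  periodic n := by simpa only [add_right_comm] using hc.periodic (n + 1)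
  sum_range_eq_zero := by
    have h := (Finset.sum_range_succ' c N).symm.trans (Finset.sum_range_succ c N)
    rw [hc.periodic.eq] at h
    exact (add_right_cancel h).trans hc.sum_range_eq_zero

lemma shift (hc : IsMeanZeroPeriodic N c) (k : ℕ) : IsMeanZeroPeriodic N fun n ↦ c (n + k) := by
  induction k with
  | zero => exact hc
  | succ k ih => simpa only [add_right_comm, add_assoc] using ih.shift_one

lemma exists_fwdDiff_eq (hc : IsMeanZeroPeriodic N c) :
    ∃ C : ℕ → ℂ, IsMeanZeroPeriodic N C ∧ Δ_[1] C = c := by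
  set S : ℕ → ℂ := fun n ↦ ∑ i ∈ Finset.range n, c i
  refine ⟨fun n ↦ S n - (∑ m ∈ Finset.range N, S m) / N, ⟨hc.pos, fun n ↦ ?_, ?_⟩, ?_⟩
  · have hS : S (n + N) = S n := by
      simp only [S]
      rw [add_comm n N, Finset.sum_range_add, hc.sum_range_eq_zero, zero_add]
      exact Finset.sum_congr rfl fun i _ ↦ by rw [add_comm, hc.periodic]
    rw [hS]
  · have : (N : ℂ) ≠ 0 := Nat.cast_ne_zero.2 hc.pos.ne'
    simp [mul_div_cancel₀ _ this]
  · ext n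
    simp [fwdDiff, S, Finset.sum_range_succ]

end IsMeanZeroPeriodic

lemma hasSum_fwdDiff_mul {R : Type*} [Ring R] [TopologicalSpace R] [IsTopologicalRing R]
    [T2Space R] {C a : ℕ → R} {S : R} (hsum : Summable fun n ↦ Δ_[1] C n * a n)
    (hlim : Tendsto (fun n ↦ C n * a n) atTop (𝓝 0))
    (hS : HasSum (fun n ↦ C (n + 1) * Δ_[1] a n) S) :
    HasSum (fun n ↦ Δ_[1] C n * a n) (-(C 0 * a 0) - S) := by
  have htelescope (m : ℕ) : ∑ n ∈ Finset.range m, (Δ_[1] C n * a n + C (n + 1) * Δ_[1] a n) =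
      C m * a m - C 0 * a 0 := by
    rw [← Finset.sum_range_sub fun n ↦ C n * a n]
    exact Finset.sum_congr rfl fun n _ ↦ by simp only [fwdDiff]; noncomm_ring
  rw [hsum.hasSum_iff_tendsto_nat]
  convert! (hlim.sub_const (C 0 * a 0)).sub hS.tendsto_sum_nat using 2
  · rw [← htelescope, Finset.sum_add_distrib, add_sub_cancel_right]
  · rw [zero_sub]

/-- The series `∑ₙ f s n` satisfies the hypothesis of the Weierstrass M-test near `s₀`. Only its
tail is constrained, on a neighbourhood of `s₀` which may not depend on `n`. -/
def IsSummablyDominatedAt (f : ℂ → ℕ → ℂ) (s₀ : ℂ) : Prop :=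
  ∃ u : ℕ → ℝ, Summable u ∧ (fun p : ℕ × ℂ ↦ f p.2 p.1) =O[atTop ×ˢ 𝓝 s₀] fun p ↦ u p.1

namespace IsSummablyDominatedAt

variable {f : ℂ → ℕ → ℂ} {s₀ : ℂ}

lemma summable (hf : IsSummablyDominatedAt f s₀) : Summable (f s₀) := by
  obtain ⟨u, hu, hfu⟩ := hf
  exact summable_of_isBigO_nat hu (hfu.comp_tendsto (tendsto_id.prodMk tendsto_const_nhds))

lemma mul_of_isBigO_one (hf : IsSummablyDominatedAt f s₀) {c : ℕ → ℂ}
    (hc : c =O[atTop] fun _ ↦ (1 : ℝ)) : IsSummablyDominatedAt (fun s n ↦ c n * f s n) s₀ := by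
  obtain ⟨u, hu, hfu⟩ := hf
  exact ⟨u, hu, by simpa using (hc.comp_tendsto tendsto_fst).mul hfu⟩

lemma differentiableAt_tsum (hf : IsSummablyDominatedAt f s₀)
    (hdiff : ∀ n, Differentiable ℂ fun s ↦ f s n) :
    DifferentiableAt ℂ (fun s ↦ ∑' n, f s n) s₀ := by
  obtain ⟨u, hu, hfu⟩ := hf
  obtain ⟨C, hC⟩ := hfu.bound
  obtain ⟨A, hA, B, hB, hAB⟩ := eventually_prod_iff.1 hC
  obtain ⟨k, hk⟩ := eventually_atTop.1 hA
  obtain ⟨U, hUB, hU, hsU⟩ := _root_.eventually_nhds_iff.1 hB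
  have hbound (n : ℕ) (s : ℂ) (hs : s ∈ U) : ‖f s (n + k)‖ ≤ C * ‖u (n + k)‖ :=
    hAB (hk _ (Nat.le_add_left k n)) (hUB s hs)
  have hsummable : Summable fun n ↦ C * ‖u (n + k)‖ :=
    ((summable_nat_add_iff k).2 hu.norm).mul_left C
  have htail := Complex.differentiableOn_tsum_of_summable_norm hsummable
    (fun n ↦ (hdiff (n + k)).differentiableOn) hU hbound
  have hhead : Differentiable ℂ fun s ↦ ∑ n ∈ Finset.range k, f s n :=
    .fun_sum fun n _ ↦ hdiff n
  refine ((hhead.differentiableOn.add htail).congr fun s hs ↦ ?_).differentiableAt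
    (hU.mem_nhds hsU)
  have := (summable_nat_add_iff k).1 (Summable.of_norm_bounded hsummable fun n ↦ hbound n s hs)
  exact (this.sum_add_tsum_nat_add k).symm

end IsSummablyDominatedAt

lemma IsMeanZeroPeriodic.exists_differentiableOn_hasSum {N : ℕ} {c : ℕ → ℂ}
    (hc : IsMeanZeroPeriodic N c) {a : ℂ → ℕ → ℂ} (ha : ∀ n, Differentiable ℂ fun s ↦ a s n)
    {U : ℕ → Set ℂ} (hU : Monotone U)
    (hdom : ∀ k, ∀ s ∈ U k, IsSummablyDominatedAt (fun t ↦ (Δ_[1])^[k] (a t)) s) (k : ℕ) :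
    ∃ g : ℂ → ℂ, DifferentiableOn ℂ g (U k) ∧
      ∀ s ∈ U 0, HasSum (fun n ↦ c n * a s n) (g s) := by
  induction k generalizing c a U with
  | zero =>
    have hca (s : ℂ) (hs : s ∈ U 0) := (hdom 0 s hs).mul_of_isBigO_one (hc.isBigO_one _)
    exact ⟨fun s ↦ ∑' n, c n * a s n,
      fun s hs ↦ ((hca s hs).differentiableAt_tsum
        fun n ↦ (ha n).const_mul (c n)).differentiableWithinAt,
      fun s hs ↦ (hca s hs).summable.hasSum⟩
  | succ k ih =>
    obtain ⟨C, hC, rfl⟩ := hc.exists_fwdDiff_eq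
    obtain ⟨g, hg, hgsum⟩ := ih hC.shift_one (a := fun s ↦ Δ_[1] (a s)) (U := fun j ↦ U (j + 1))
      (fun n ↦ (ha (n + 1)).sub (ha n)) (fun i j hij ↦ hU (Nat.succ_le_succ hij))
      fun j ↦ hdom (j + 1)
    refine ⟨fun s ↦ -(C 0 * a s 0) - g s,
      ((ha 0).const_mul (C 0)).neg.differentiableOn.sub hg, fun s hs ↦ ?_⟩
    refine hasSum_fwdDiff_mul ?_ ?_ (hgsum s (hU (Nat.zero_le 1) hs))
    · exact ((hdom 0 s hs).mul_of_isBigO_one (hc.isBigO_one _)).summable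
    · exact ((hdom 0 s hs).mul_of_isBigO_one (hC.isBigO_one _)).summable.tendsto_atTop_zero

theorem exists_differentiable_eqOn_of_monotone_cover {E : Type*} [NormedAddCommGroup E]
    [NormedSpace ℂ E] [CompleteSpace E] {U : ℕ → Set ℂ} (hU : Monotone U)
    (hopen : ∀ k, IsOpen (U k)) (hconn : ∀ k, IsPreconnected (U k)) (hne : (U 0).Nonempty)
    (hcover : ∀ s, ∃ k, s ∈ U k) {f : ℂ → E}
    (hf : ∀ k, ∃ g : ℂ → E, DifferentiableOn ℂ g (U k) ∧ Set.EqOn g f (U 0)) :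
    ∃ F : ℂ → E, Differentiable ℂ F ∧ Set.EqOn F f (U 0) := by
  choose g hg hgf using hf
  obtain ⟨s₀, hs₀⟩ := hne
  have hagree {j k : ℕ} (hjk : j ≤ k) : Set.EqOn (g j) (g k) (U j) := by
    refine ((hg j).analyticOnNhd (hopen j)).eqOn_of_preconnected_of_eventuallyEq
      (((hg k).mono (hU hjk)).analyticOnNhd (hopen j)) (hconn j) (hU (Nat.zero_le j) hs₀) ?_
    filter_upwards [(hopen 0).mem_nhds hs₀] with s hs
    exact (hgf j hs).trans (hgf k hs).symm
  choose κ hκ using hcover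
  have heq {k : ℕ} {s : ℂ} (hs : s ∈ U k) : g (κ s) s = g k s := by
    rcases le_total (κ s) k with h | h
    exacts [hagree h (hκ s), (hagree h hs).symm]
  refine ⟨fun s ↦ g (κ s) s, fun s ↦ ?_, fun s hs ↦ hgf _ hs⟩
  have hnhds := (hopen (κ s)).mem_nhds (hκ s)
  refine ((hg (κ s)).differentiableAt hnhds).congr_of_eventuallyEq ?_
  filter_upwards [hnhds] with t ht using heq ht

lemma fwdDiff_iter_comp_natCast_add {G : Type*} [AddCommGroup G] (f : ℂ → G) (A k n : ℕ) :
    (Δ_[1])^[k] (fun m : ℕ ↦ f ((m + A : ℕ) : ℂ)) n = (Δ_[1])^[k] f ((n + A : ℕ) : ℂ) := by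
  simp [fwdDiff_iter_eq_sum_shift, add_right_comm]

lemma IsSectorialBigO.isSummablyDominatedAt_fwdDiff_iter {f : ℂ → ℂ → ℂ} {s : ℂ} {e : ℝ}
    (hf : IsSectorialBigO (𝓝 s) f e) (A : ℕ) {k : ℕ} (hk : e - k < -1) :
    IsSummablyDominatedAt (fun t ↦ (Δ_[1])^[k] fun n : ℕ ↦ f t ((n + A : ℕ) : ℂ)) s := by
  refine ⟨fun n ↦ ((n + A : ℕ) : ℝ) ^ (e - k),
    (summable_nat_add_iff A).2 (Real.summable_nat_rpow.2 hk), ?_⟩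
  have hcast : Tendsto (fun p : ℕ × ℂ ↦ (((p.1 + A : ℕ) : ℂ), p.2)) (atTop ×ˢ 𝓝 s)
      (positiveSector ×ˢ 𝓝 s) :=
    ((tendsto_natCast_positiveSector.comp (tendsto_add_atTop_nat A)).comp tendsto_fst).prodMk
      tendsto_snd
  simpa only [fwdDiff_iter_comp_natCast_add, Function.comp_def, Complex.norm_natCast] using
    (hf.fwdDiff_iter k).isBigO.comp_tendsto hcast

lemma isSummablyDominatedAt_fwdDiff_iter_eval_mul_cpow {P : ℂ[X]} (hdeg : 0 < P.natDegree)
    (hlead : P.leadingCoeff ∈ Complex.slitPlane) (Q : ℂ[X]) (A k : ℕ) {s : ℂ}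
    (hs : (Q.natDegree + 1 - k : ℝ) / P.natDegree < s.re) :
    IsSummablyDominatedAt (fun t ↦ (Δ_[1])^[k] fun n : ℕ ↦
      Q.eval ((n + A : ℕ) : ℂ) * P.eval ((n + A : ℕ) : ℂ) ^ (-t)) s := by
  obtain ⟨α, hkα, hαs⟩ := exists_between hs
  refine ((isSectorialBigO_eval (𝓝 s) Q).mul
    (isSectorialBigO_eval_cpow_neg hdeg hlead hαs)).isSummablyDominatedAt_fwdDiff_iter A ?_
  rw [div_lt_iff₀' (Nat.cast_pos.2 hdeg)] at hkα
  linarith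

lemma exists_differentiable_eqOn_of_halfPlane {E : Type*} [NormedAddCommGroup E]
    [NormedSpace ℂ E] [CompleteSpace E] {σ : ℕ → ℝ} (hσ : Antitone σ)
    (hlim : Tendsto σ atTop atBot) {f : ℂ → E}
    (hf : ∀ k, ∃ g : ℂ → E, DifferentiableOn ℂ g {s | σ k < s.re} ∧
      Set.EqOn g f {s | σ 0 < s.re}) :
    ∃ F : ℂ → E, Differentiable ℂ F ∧ Set.EqOn F f {s | σ 0 < s.re} :=
  exists_differentiable_eqOn_of_monotone_cover (U := fun k ↦ {s | σ k < s.re})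
    (fun _ _ hjk _ hs ↦ (hσ hjk).trans_lt hs)
    (fun _ ↦ isOpen_lt continuous_const Complex.continuous_re)
    (fun _ ↦ (convex_halfSpace_re_gt _).isPreconnected)
    ⟨(σ 0 + 1 : ℝ), by simp⟩
    (fun s ↦ (hlim.eventually_lt_atBot s.re).exists) hf

theorem dirichlet_like_holomorphic_continuation_general {N : ℕ} {χ : ℕ → ℂ} {A : ℕ}
    (hχ : IsMeanZeroPeriodic N fun n ↦ χ (n + A)) {P : ℂ[X]} (hdeg : 0 < P.natDegree)
    (hlead : P.leadingCoeff ∈ Complex.slitPlane) (hP : ∀ n : ℕ, A ≤ n → P.eval (n : ℂ) ≠ 0)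
    (Q : ℂ[X]) :
    ∃ F : ℂ → ℂ, Differentiable ℂ F ∧
      ∀ s : ℂ, (Q.natDegree + 1 : ℝ) / P.natDegree < s.re →
        HasSum (fun n : ℕ ↦ χ (n + A) * Q.eval ((n + A : ℕ) : ℂ) / P.eval ((n + A : ℕ) : ℂ) ^ s)
          (F s) := by
  have hd : (0 : ℝ) < P.natDegree := Nat.cast_pos.2 hdeg
  set σ : ℕ → ℝ := fun k ↦ (Q.natDegree + 1 - k) / P.natDegree
  have hσ : Antitone σ := fun j k hjk ↦ by dsimp only [σ]; gcongr
  have hlim : Tendsto σ atTop atBot :=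
    (tendsto_atBot_add_const_left _ _
      (tendsto_neg_atTop_atBot.comp tendsto_natCast_atTop_atTop)).atBot_div_const hd
  have hentire (n : ℕ) : Differentiable ℂ fun s : ℂ ↦
      Q.eval ((n + A : ℕ) : ℂ) * P.eval ((n + A : ℕ) : ℂ) ^ (-s) :=
    (differentiable_neg.const_cpow (.inl (hP _ (Nat.le_add_left A n)))).const_mul _
  have hcont := hχ.exists_differentiableOn_hasSum hentire (U := fun k ↦ {s | σ k < s.re})
    (fun j k hjk s hs ↦ (hσ hjk).trans_lt hs)
    fun k s hs ↦ isSummablyDominatedAt_fwdDiff_iter_eval_mul_cpow hdeg hlead Q A k hs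
  obtain ⟨F, hF, hFsum⟩ := exists_differentiable_eqOn_of_halfPlane hσ hlim fun k ↦
    (hcont k).imp fun g hg ↦ ⟨hg.1, fun s hs ↦ (hg.2 s hs).tsum_eq.symm⟩
  refine ⟨F, hF, fun s hs ↦ ?_⟩
  have hs0 : σ 0 < s.re := by simpa [σ] using hs
  obtain ⟨g, -, hg⟩ := hcont 0
  rw [hFsum hs0]
  simpa only [Complex.cpow_neg, div_eq_mul_inv, mul_assoc] using (hg s hs0).summable.hasSum

lemma IsMeanZeroPeriodic.of_one_le {N : ℕ} (hN : 0 < N) {χ : ℕ → ℂ}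
    (hper : ∀ n : ℕ, 1 ≤ n → χ (n + N) = χ n) (hsum : ∑ n ∈ Finset.Icc 1 N, χ n = 0)
    {A : ℕ} (hA : 1 ≤ A) : IsMeanZeroPeriodic N fun n ↦ χ (n + A) := by
  have hone : IsMeanZeroPeriodic N fun n ↦ χ (n + 1) :=
    { pos := hN
      periodic := fun n ↦ by simpa only [add_right_comm] using hper (n + 1) n.succ_pos
      sum_range_eq_zero := by
        rwa [Finset.range_eq_Ico, Finset.sum_Ico_add', zero_add, Finset.Ico_add_one_right_eq_Icc] }
  simpa only [add_assoc, Nat.sub_add_cancel hA] using hone.shift (A - 1)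

lemma natDegree_derivative_add_one_div {R : Type*} [Semiring R] [IsAddTorsionFree R] {P : R[X]}
    (hP : 0 < P.natDegree) : (P.derivative.natDegree + 1 : ℝ) / P.natDegree = 1 := by
  rw [Polynomial.natDegree_derivative, ← Nat.cast_add_one, Nat.sub_add_cancel hP,
    div_self (Nat.cast_pos.2 hP).ne']

/-- The Dirichlet-like series `L_{A,χ,P}` has a holomorphic continuation to the
whole complex plane: there is an entire function `F` agreeing with the series for `Re(s) > 1`. -/
theorem dirichlet_like_holomorphic_continuation
    (N : ℕ) (hN : 1 ≤ N) (χ : ℕ → ℂ)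
    (hper : ∀ n : ℕ, 1 ≤ n → χ (n + N) = χ n)
    (hsum : ∑ n ∈ Finset.Icc 1 N, χ n = 0)
    (P : Polynomial ℝ) (d : ℕ) (hd : 1 ≤ d) (hdeg : P.natDegree = d)
    (hlead : 0 < P.leadingCoeff)
    (A : ℕ) (hA : 1 ≤ A) (hpos : ∀ n : ℕ, A ≤ n → 0 < P.eval (n : ℝ)) :
    ∃ F : ℂ → ℂ, Differentiable ℂ F ∧
      ∀ s : ℂ, 1 < s.re →
        F s = ∑' n : ℕ,
          χ (n + A) * (Complex.ofReal ((Polynomial.derivative P).eval ((n + A : ℕ) : ℝ))) /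
            (Complex.ofReal (P.eval ((n + A : ℕ) : ℝ))) ^ s := by
  have hP : 0 < P.natDegree := hdeg ▸ hd
  obtain ⟨F, hF, hFsum⟩ := dirichlet_like_holomorphic_continuation_general
    (P := P.map Complex.ofRealHom) (.of_one_le hN hper hsum hA) (by simpa) (by simpa)
    (fun n hn ↦ by simpa using (hpos n hn).ne') (P.derivative.map Complex.ofRealHom)
  simp only [Polynomial.natDegree_map, natDegree_derivative_add_one_div hP,
    Polynomial.eval_natCast_map] at hFsum
  exact ⟨F, hF, fun s hs ↦ (hFsum s hs).tsum_eq.symm⟩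
end

section
/- Suppose in addition that Re(P(n)) > 0 for all integers n ≥ 1. Let F : ℂ → ℂ be holomorphic on ℂ with F(s) = Σ_{n=1}^∞ χ(n)·P'(n)/P(n)^s for all s with Re(s) > 1. Then for every positive integer m, F(1−m) = −Ψ_χ(P^m)/m. -/
/-- The linear form `Ψ_χ` applied to a real polynomial `Q`, where `ψ m = Ψ_χ(X^m)` is the
sequence of moments attached to `χ`. -/
noncomputable def PsiPolyR (ψ : ℕ → ℂ) (Q : Polynomial ℝ) : ℂ :=
  ∑ k ∈ Q.support, (Complex.ofReal (Q.coeff k)) * ψ k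

/-!
Let `L` be the entire continuation of `∑ χ(n) n⁻ˢ` and let `Λ` be the linear form on polynomials
with `Λ(Xʲ) = L(-j)`. Expanding `Q(n) P(n)⁻ˢ` in powers of `1 / n` up to a sufficiently high order
writes `∑ χ(n) Q(n) P(n)⁻ˢ` as a finite combination of shifted values of `L` plus a locally
uniformly convergent series, which continues it to any given half-plane. At `s = -k` the expansion
terminates and the remainder vanishes, so the value of the continuation there is `Λ(Q Pᵏ)`.

For `Q = 1` and `P = X + N` the series is `L` without its first `N` terms, by periodicity, whence
`Λ((X + N)ᵏ) = Λ(Xᵏ) - ∑_{n ≤ N} χ(n) nᵏ`. This functional equation determines the exponential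
generating function of the moments of `Λ`, and comparing it with the one defining `Ψ_χ` gives
`Ψ_χ(p) = -Λ(p')`. The theorem is the case `Q = P'`, because `P' Pᵐ⁻¹ = (Pᵐ)' / m`.
-/

section Taylor

open Filter Metric Topology
open scoped Nat

variable {E : Type*} [NormedAddCommGroup E] [NormedSpace ℂ E]

/-- The `k`-th coefficient of the Taylor series of `f` at `c`. -/
noncomputable def taylorCoeff (f : ℂ → E) (c : ℂ) (k : ℕ) : E :=
  (k ! : ℂ)⁻¹ • iteratedDeriv k f c

/-- The error made when `f z` is replaced by the first `K` terms of the Taylor series of `f`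
at `c`. -/
noncomputable def taylorRemainder (f : ℂ → E) (c : ℂ) (K : ℕ) (z : ℂ) : E :=
  f z - ∑ k ∈ Finset.range K, (z - c) ^ k • taylorCoeff f c k

lemma norm_taylorRemainder_le [CompleteSpace E] {f : ℂ → E} {c z : ℂ} {r M : ℝ} (hr : 0 < r)
    (hf : DiffContOnCl ℂ f (ball c r)) (hM : ∀ w ∈ sphere c r, ‖f w‖ ≤ M) (K : ℕ)
    (hz : ‖z - c‖ ≤ r / 2) :
    ‖taylorRemainder f c K z‖ ≤ 2 * M * (‖z - c‖ / r) ^ K := by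
  have hz_mem : z ∈ ball c r := by
    rw [mem_ball_iff_norm]
    linarith
  have hratio : ‖z - c‖ / r ≤ 1 / 2 := by
    rw [div_le_iff₀ hr]
    linarith
  have hterm (k : ℕ) : ‖(z - c) ^ k • taylorCoeff f c k‖ ≤ M * (‖z - c‖ / r) ^ k := by
    have hcauchy := Complex.norm_iteratedDeriv_le_of_forall_mem_sphere_norm_le k hr hf hM
    rw [taylorCoeff, norm_smul, norm_smul, norm_inv, norm_pow, Complex.norm_natCast]
    calc ‖z - c‖ ^ k * ((k ! : ℝ)⁻¹ * ‖iteratedDeriv k f c‖)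
      _ ≤ ‖z - c‖ ^ k * ((k ! : ℝ)⁻¹ * (k ! * M / r ^ k)) := by gcongr
      _ = M * (‖z - c‖ / r) ^ k := by
        have := k.factorial_ne_zero
        rw [div_pow]
        field_simp
  have hM_nonneg : 0 ≤ M := by simpa using (norm_nonneg _).trans (hterm 0)
  have hseries : HasSum (fun k => (z - c) ^ k • taylorCoeff f c k) (f z) := by
    simpa only [taylorCoeff, smul_comm ((_ : ℂ) ^ _)] using
      Complex.hasSum_taylorSeries_on_ball hf.differentiableOn hz_mem
  have htail := (hasSum_nat_add_iff' K).mpr hseries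
  have hgeom := hasSum_geometric_two.mul_left (M * (‖z - c‖ / r) ^ K)
  rw [show 2 * M * (‖z - c‖ / r) ^ K = M * (‖z - c‖ / r) ^ K * 2 by ring]
  refine htail.norm_le_of_bounded hgeom fun k => (hterm (k + K)).trans ?_
  rw [pow_add, mul_comm ((‖z - c‖ / r) ^ k), ← mul_assoc]
  gcongr

lemma analyticAt_iteratedDeriv_snd {𝕜 X F : Type*} [NontriviallyNormedField 𝕜]
    [NormedAddCommGroup X] [NormedSpace 𝕜 X] [NormedAddCommGroup F] [NormedSpace 𝕜 F]
    [CompleteSpace F] {g : X × 𝕜 → F} {p : X × 𝕜} (hg : AnalyticAt 𝕜 g p) (k : ℕ) :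
    AnalyticAt 𝕜 (fun q : X × 𝕜 => iteratedDeriv k (fun u => g (q.1, u)) q.2) p := by
  induction k with
  | zero => simpa using hg
  | succ k ih =>
    refine (((ContinuousLinearMap.apply 𝕜 F ((0 : X), (1 : 𝕜))).analyticAt _).comp
      ih.fderiv).congr ?_
    filter_upwards [ih.eventually_analyticAt] with q hq
    have hcurve : HasDerivAt (fun u : 𝕜 => (q.1, u)) ((0 : X), (1 : 𝕜)) q.2 :=
      (hasDerivAt_const q.2 q.1).prodMk (hasDerivAt_id q.2)
    rw [iteratedDeriv_succ]
    exact (hq.differentiableAt.hasFDerivAt.comp_hasDerivAt q.2 hcurve).deriv.symm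

lemma analyticAt_taylorCoeff {X : Type*} [NormedAddCommGroup X] [NormedSpace ℂ X]
    [CompleteSpace E] {g : X × ℂ → E} {s : X} {c : ℂ} (hg : AnalyticAt ℂ g (s, c)) (k : ℕ) :
    AnalyticAt ℂ (fun t => taylorCoeff (fun u => g (t, u)) c k) s := by
  have hcoeff := (analyticAt_iteratedDeriv_snd hg k).comp₂ (analyticAt_id (z := s))
    (analyticAt_const (v := c))
  exact hcoeff.const_smul

lemma exists_norm_taylorRemainder_le [CompleteSpace E] {X : Type*} [NormedAddCommGroup X]
    [NormedSpace ℂ X] {g : X × ℂ → E} {T : Set X} (hT : IsCompact T) {c : ℂ}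
    (hg : ∀ s ∈ T, AnalyticAt ℂ g (s, c)) (K : ℕ) :
    ∃ C : ℝ, 0 ≤ C ∧ ∀ᶠ z in 𝓝 c, ∀ s ∈ T,
      ‖taylorRemainder (fun u => g (s, u)) c K z‖ ≤ C * ‖z - c‖ ^ K := by
  -- The tube lemma provides a disc around `c` of the same radius for all parameters in `T`.
  obtain ⟨U, V, -, hV, hTU, hcV, hUV⟩ := generalized_tube_lemma hT isCompact_singleton
    (isOpen_analyticAt ℂ g) (t := {c}) (by rintro ⟨s, u⟩ ⟨hs, rfl⟩; exact hg s hs)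
  obtain ⟨r, hr, hrV⟩ := nhds_basis_closedBall.mem_iff.mp (hV.mem_nhds (hcV rfl))
  have han {s : X} (hs : s ∈ T) {u : ℂ} (hu : u ∈ closedBall c r) : AnalyticAt ℂ g (s, u) :=
    hUV ⟨hTU hs, hrV hu⟩
  obtain ⟨M, hM⟩ := (hT.prod (isCompact_closedBall c r)).exists_bound_of_continuousOn
    (f := g) fun p hp => (han hp.1 hp.2).continuousAt.continuousWithinAt
  refine ⟨2 * |M| / r ^ K, by positivity, ?_⟩
  filter_upwards [closedBall_mem_nhds c (half_pos hr)] with z hz s hs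
  have hdiff : DiffContOnCl ℂ (fun u => g (s, u)) (ball c r) := by
    refine DifferentiableOn.diffContOnCl_ball (U := closedBall c r) (fun u hu => ?_) subset_rfl
    exact ((han hs hu).differentiableAt.comp u (by fun_prop)).differentiableWithinAt
  refine (norm_taylorRemainder_le hr hdiff
    (fun u hu => (hM (s, u) ⟨hs, sphere_subset_closedBall hu⟩).trans (le_abs_self M)) K
    (mem_closedBall_iff_norm.mp hz)).trans_eq ?_
  rw [div_pow]
  ring

lemma iteratedDeriv_polynomial_eval (p : Polynomial ℂ) (k : ℕ) :
    iteratedDeriv k (fun u => p.eval u) = fun u => (Polynomial.derivative^[k] p).eval u := by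
  induction k with
  | zero => simp
  | succ k ih =>
    funext u
    rw [iteratedDeriv_succ, ih, Polynomial.deriv, Function.iterate_succ_apply']

lemma taylorCoeff_polynomial_eval_zero (p : Polynomial ℂ) (k : ℕ) :
    taylorCoeff (fun u => p.eval u) 0 k = p.coeff k := by
  simp only [taylorCoeff, iteratedDeriv_polynomial_eval]
  rw [← Polynomial.coeff_zero_eq_eval_zero,
    Polynomial.coeff_iterate_derivative, zero_add, Nat.descFactorial_self, nsmul_eq_mul,
    smul_eq_mul, inv_mul_cancel_left₀ (Nat.cast_ne_zero.mpr k.factorial_ne_zero)]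

lemma taylorRemainder_polynomial_eval_zero {p : Polynomial ℂ} {K : ℕ} (hK : p.natDegree < K)
    (z : ℂ) : taylorRemainder (fun u => p.eval u) 0 K z = 0 := by
  simp only [taylorRemainder, taylorCoeff_polynomial_eval_zero, sub_zero, smul_eq_mul]
  rw [p.eval_eq_sum_range' hK, sub_eq_zero]
  exact Finset.sum_congr rfl fun k _ => mul_comm _ _

end Taylor

section Continuation

open Filter Topology

variable {a : ℕ → ℂ} {L : ℂ → ℂ} {g : ℂ × ℂ → ℂ} {δ : ℂ → ℂ}

lemma lseriesTerm_mul_inv_natCast_pow (a : ℕ → ℂ) (s : ℂ) (k n : ℕ) :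
    LSeries.term a s n * (n : ℂ)⁻¹ ^ k = LSeries.term a (s + k) n := by
  rcases eq_or_ne n 0 with rfl | hn
  · simp only [LSeries.term_zero, zero_mul]
  · rw [LSeries.term_of_ne_zero hn, LSeries.term_of_ne_zero hn,
      Complex.cpow_add _ _ (Nat.cast_ne_zero.mpr hn), Complex.cpow_natCast, inv_pow,
      div_mul_eq_div_div, div_eq_mul_inv (_ / _)]

lemma differentiable_lseriesTerm (a : ℕ → ℂ) (n : ℕ) :
    Differentiable ℂ fun s => LSeries.term a s n := by
  rcases eq_or_ne n 0 with rfl | hn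
  · simpa only [LSeries.term_zero] using differentiable_const (0 : ℂ)
  · have hbase : (n : ℂ) ≠ 0 := Nat.cast_ne_zero.mpr hn
    simp only [LSeries.term_of_ne_zero hn]
    exact (differentiable_const _).div (differentiable_id.const_cpow (.inl hbase))
      fun s => Complex.cpow_ne_zero_iff.mpr (.inl hbase)

/-- The analytic continuation of `∑ₙ a(n) n ^ (-δ(s)) g(s, 1 / n)` obtained by Taylor expanding
`g(s, ·)` to order `K`: the main terms are summed by the continuation `L` of the `L`-series
of `a`, and the remainder is summed termwise. -/
noncomputable def taylorContinuation (a : ℕ → ℂ) (L : ℂ → ℂ) (δ : ℂ → ℂ) (g : ℂ × ℂ → ℂ) (K : ℕ)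
    (s : ℂ) : ℂ :=
  ∑ k ∈ Finset.range K, taylorCoeff (fun u => g (s, u)) 0 k * L (δ s + k) +
    ∑' n, LSeries.term a (δ s) n * taylorRemainder (fun u => g (s, u)) 0 K (n : ℂ)⁻¹

lemma summableLocallyUniformlyOn_taylorRemainder (ha : LSeriesSummable a 2)
    (hδ : Continuous δ) (hg : ∀ s, AnalyticAt ℂ g (s, 0)) (K : ℕ) :
    SummableLocallyUniformlyOn
      (fun n s => LSeries.term a (δ s) n * taylorRemainder (fun u => g (s, u)) 0 K (n : ℂ)⁻¹)
      {s | 2 < (δ s).re + K} := by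
  refine SummableLocallyUniformlyOn.of_locally_bounded_eventually
    (isOpen_lt continuous_const (by fun_prop)) fun T hTW hT => ?_
  obtain ⟨C, hC_nonneg, hC⟩ := exists_norm_taylorRemainder_le hT (fun s _ => hg s) K
  refine ⟨fun n => C * ‖LSeries.term a 2 n‖, ha.norm.mul_left C, ?_⟩
  rw [Nat.cofinite_eq_atTop]
  filter_upwards [tendsto_inv_atTop_nhds_zero_nat.eventually hC] with n hn s hs
  have hre : (2 : ℂ).re ≤ (δ s + K).re := by simpa using (hTW hs).le
  calc ‖LSeries.term a (δ s) n * taylorRemainder (fun u => g (s, u)) 0 K (n : ℂ)⁻¹‖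
    _ ≤ ‖LSeries.term a (δ s) n‖ * (C * ‖(n : ℂ)⁻¹‖ ^ K) := by
      rw [norm_mul]
      gcongr
      simpa using hn s hs
    _ = C * ‖LSeries.term a (δ s + K) n‖ := by
      rw [← lseriesTerm_mul_inv_natCast_pow, norm_mul, norm_pow]
      ring
    _ ≤ C * ‖LSeries.term a 2 n‖ := by
      gcongr
      exact LSeries.norm_term_le_of_re_le_re a hre n

lemma differentiableOn_taylorContinuation (ha : LSeriesSummable a 2) (hL : Differentiable ℂ L)
    (hδ : Differentiable ℂ δ) (hg : ∀ s, AnalyticAt ℂ g (s, 0))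
    (hgn : ∀ n : ℕ, n ≠ 0 → Differentiable ℂ fun s => g (s, (n : ℂ)⁻¹)) (K : ℕ) :
    DifferentiableOn ℂ (taylorContinuation a L δ g K) {s | 2 < (δ s).re + K} := by
  have hcoeff (k : ℕ) : Differentiable ℂ fun s => taylorCoeff (fun u => g (s, u)) 0 k :=
    fun s => (analyticAt_taylorCoeff (hg s) k).differentiableAt
  have hmain : Differentiable ℂ fun s =>
      ∑ k ∈ Finset.range K, taylorCoeff (fun u => g (s, u)) 0 k * L (δ s + k) :=
    Differentiable.fun_sum fun k _ => (hcoeff k).mul (hL.comp (hδ.add_const _))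
  refine hmain.differentiableOn.add
    ((summableLocallyUniformlyOn_taylorRemainder ha hδ.continuous hg K).differentiableOn
      (isOpen_lt continuous_const (by have := hδ.continuous; fun_prop)) fun n s _ => ?_)
  rcases eq_or_ne n 0 with rfl | hn
  · simp only [LSeries.term_zero, zero_mul, differentiableAt_const]
  · exact ((differentiable_lseriesTerm a n).comp hδ s).mul
      ((hgn n hn s).sub (DifferentiableAt.fun_sum fun k _ =>
        (hcoeff k s).const_smul (((n : ℂ)⁻¹ - 0) ^ k)))

lemma hasSum_taylorContinuation (hL : ∀ s, 1 < s.re → LSeriesHasSum a s (L s))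
    (hδ : Continuous δ) (hg : ∀ s, AnalyticAt ℂ g (s, 0)) {K : ℕ} {s : ℂ}
    (hs : 1 < (δ s).re) (hsK : 2 < (δ s).re + K) :
    HasSum (fun n : ℕ => LSeries.term a (δ s) n * g (s, (n : ℂ)⁻¹))
      (taylorContinuation a L δ g K s) := by
  have hmain (k : ℕ) : HasSum
      (fun n : ℕ => LSeries.term a (δ s) n *
        ((n : ℂ)⁻¹ ^ k * taylorCoeff (fun u => g (s, u)) 0 k))
      (taylorCoeff (fun u => g (s, u)) 0 k * L (δ s + k)) := by
    have hre : 1 < (δ s + k).re := by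
      rw [Complex.add_re, Complex.natCast_re]
      exact hs.trans_le (le_add_of_nonneg_right k.cast_nonneg)
    refine ((hL _ hre).mul_left _).congr_fun fun n => ?_
    rw [← lseriesTerm_mul_inv_natCast_pow]
    ring
  have hrem := ((summableLocallyUniformlyOn_taylorRemainder
    (hL 2 (by norm_num)).LSeriesSummable hδ hg K).summable hsK).hasSum
  refine ((hasSum_sum fun k (_ : k ∈ Finset.range K) => hmain k).add hrem).congr_fun fun n => ?_
  simp only [taylorRemainder, sub_zero, smul_eq_mul, ← Finset.mul_sum]
  ring

lemma eq_taylorContinuation (hL : Differentiable ℂ L)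
    (hLa : ∀ s, 1 < s.re → LSeriesHasSum a s (L s)) (hg : ∀ s, AnalyticAt ℂ g (s, 0))
    (hgn : ∀ n : ℕ, n ≠ 0 → Differentiable ℂ fun s => g (s, (n : ℂ)⁻¹))
    {α : ℝ} (hα : 0 < α) {β : ℂ} {F : ℂ → ℂ} (hF : Differentiable ℂ F) {σ : ℝ}
    (hFs : ∀ s : ℂ, σ < s.re →
      F s = ∑' n : ℕ, LSeries.term a (α * s + β) n * g (s, (n : ℂ)⁻¹))
    {K : ℕ} {s : ℂ} (hs : 2 < (α * s + β).re + K) :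
    F s = taylorContinuation a L (fun s => α * s + β) g K s := by
  have ha := (hLa 2 (by norm_num)).LSeriesSummable
  have hδ : Differentiable ℂ fun s : ℂ => α * s + β := by fun_prop
  have hδ_re : Continuous fun t : ℂ => (α * t + β).re := by fun_prop
  have hre (t : ℂ) : (α * t + β).re = α * t.re + β.re := by simp
  have hW_open : IsOpen {t : ℂ | 2 < (α * t + β).re + K} :=
    isOpen_lt continuous_const (by fun_prop)
  have hW_preconnected : IsPreconnected {t : ℂ | 2 < (α * t + β).re + K} := by
    convert (convex_halfSpace_re_gt ((2 - K - β.re) / α)).isPreconnected using 3 with t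
    rw [div_lt_iff₀ hα, hre, mul_comm, sub_lt_iff_lt_add, sub_lt_iff_lt_add]
  obtain ⟨x, hxσ, hx⟩ : ∃ x : ℝ, σ < x ∧ max 1 (2 - (K : ℝ)) < α * x + β.re :=
    ((eventually_gt_atTop σ).and ((tendsto_atTop_add_const_right _ _
      (tendsto_id.const_mul_atTop hα)).eventually_gt_atTop _)).exists
  have hmem (t : ℂ) (ht : max 1 (2 - (K : ℝ)) < (α * t + β).re) : 2 < (α * t + β).re + K :=
    sub_lt_iff_lt_add.mp ((le_max_right _ _).trans_lt ht)
  have hx' : max 1 (2 - (K : ℝ)) < (α * (x : ℂ) + β).re := by rwa [hre, Complex.ofReal_re]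
  have heq : F =ᶠ[𝓝 (x : ℂ)] taylorContinuation a L (fun s => α * s + β) g K := by
    filter_upwards [Complex.continuous_re.continuousAt.eventually_const_lt hxσ,
      hδ_re.continuousAt.eventually_const_lt hx'] with t htσ ht
    rw [hFs t htσ]
    exact (hasSum_taylorContinuation hLa hδ.continuous hg ((le_max_left _ _).trans_lt ht)
      (hmem t ht)).tsum_eq
  have hF_analytic : AnalyticOnNhd ℂ F {t | 2 < (α * t + β).re + K} := fun t _ => hF.analyticAt t
  exact hF_analytic.eqOn_of_preconnected_of_eventuallyEq
    ((differentiableOn_taylorContinuation ha hL hδ hg hgn K).analyticOnNhd hW_open)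
    hW_preconnected (hmem x hx') heq hs

lemma apply_eq_sum_of_forall_eq_polynomial_eval (hL : Differentiable ℂ L)
    (hLa : ∀ s, 1 < s.re → LSeriesHasSum a s (L s)) (hg : ∀ s, AnalyticAt ℂ g (s, 0))
    (hgn : ∀ n : ℕ, n ≠ 0 → Differentiable ℂ fun s => g (s, (n : ℂ)⁻¹))
    {α : ℝ} (hα : 0 < α) {β : ℂ} {F : ℂ → ℂ} (hF : Differentiable ℂ F) {σ : ℝ}
    (hFs : ∀ s : ℂ, σ < s.re →
      F s = ∑' n : ℕ, LSeries.term a (α * s + β) n * g (s, (n : ℂ)⁻¹))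
    {s : ℂ} {p : Polynomial ℂ} (hp : ∀ u, g (s, u) = p.eval u) :
    F s = p.sum fun k c => c * L (α * s + β + k) := by
  obtain ⟨K, hKs, hKp⟩ : ∃ K : ℕ, 2 - (α * s + β).re < K ∧ p.natDegree < K :=
    ((tendsto_natCast_atTop_atTop.eventually_gt_atTop _).and (eventually_gt_atTop _)).exists
  rw [eq_taylorContinuation hL hLa hg hgn hα hF hFs (sub_lt_iff_lt_add'.mp hKs),
    p.sum_over_range' (by simp only [zero_mul, implies_true]) K hKp, taylorContinuation]
  simp only [hp, taylorCoeff_polynomial_eval_zero, taylorRemainder_polynomial_eval_zero hKp,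
    mul_zero, tsum_zero, add_zero]

end Continuation

section PolynomialSeries

open Polynomial

lemma eval_eq_pow_mul_eval_reverse (p : ℂ[X]) {x : ℂ} (hx : x ≠ 0) :
    p.eval x = x ^ p.natDegree * p.reverse.eval x⁻¹ := by
  let := invertibleOfNonzero hx
  rw [mul_comm, ← invOf_eq_inv]
  exact (eval₂_reverse_mul_pow (RingHom.id ℂ) x p).symm

/-- The function `g` with `Q(n) P(n) ^ (-s) = n ^ (deg Q - s deg P) g(s, 1 / n)`, whose expansion
at `u = 0` is that of `Q(n) P(n) ^ (-s)` at infinity. Reversed polynomials make it analytic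
across `u = 0`. -/
noncomputable def kernelAtInfinity (Q P : ℂ[X]) (w : ℂ × ℂ) : ℂ :=
  Q.reverse.eval w.2 * P.reverse.eval w.2 ^ (-w.1)

lemma analyticAt_kernelAtInfinity_zero (Q : ℂ[X]) {P : ℂ[X]}
    (hP : P.leadingCoeff ∈ Complex.slitPlane) (s : ℂ) :
    AnalyticAt ℂ (kernelAtInfinity Q P) (s, 0) := by
  have heval (p : ℂ[X]) : AnalyticAt ℂ (fun w : ℂ × ℂ => p.eval w.2) (s, 0) :=
    (p.differentiable.analyticAt _).comp analyticAt_snd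
  refine (heval _).mul ((heval _).cpow analyticAt_fst.neg ?_)
  rwa [← coeff_zero_eq_eval_zero, coeff_zero_reverse]

lemma differentiable_kernelAtInfinity (Q : ℂ[X]) {P : ℂ[X]} {x : ℂ} (hx : x ≠ 0)
    (hP : P.eval x ≠ 0) : Differentiable ℂ fun s => kernelAtInfinity Q P (s, x⁻¹) := by
  rw [eval_eq_pow_mul_eval_reverse P hx] at hP
  exact (differentiable_neg.const_cpow (.inl (right_ne_zero_of_mul hP))).const_mul
    (Q.reverse.eval x⁻¹)

lemma ofReal_mul_cpow {r : ℝ} (hr : 0 ≤ r) (z s : ℂ) : (r * z) ^ s = (r : ℂ) ^ s * z ^ s := by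
  rcases eq_or_ne s 0 with rfl | hs
  · simp only [Complex.cpow_zero, mul_one]
  rcases hr.eq_or_lt with rfl | hr
  · simp only [Complex.ofReal_zero, zero_mul, Complex.zero_cpow hs]
  rcases eq_or_ne z 0 with rfl | hz
  · simp only [mul_zero, Complex.zero_cpow hs]
  have hr' : (r : ℂ) ≠ 0 := Complex.ofReal_ne_zero.mpr hr.ne'
  rw [Complex.cpow_def_of_ne_zero (mul_ne_zero hr' hz), Complex.cpow_def_of_ne_zero hr',
    Complex.cpow_def_of_ne_zero hz, Complex.log_ofReal_mul hr hz, Complex.ofReal_log hr.le,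
    add_mul, Complex.exp_add]

lemma eval_natCast_cpow (p : ℂ[X]) {n : ℕ} (hn : n ≠ 0) (s : ℂ) :
    p.eval (n : ℂ) ^ s = (n : ℂ) ^ (p.natDegree * s) * p.reverse.eval (n : ℂ)⁻¹ ^ s := by
  rw [eval_eq_pow_mul_eval_reverse p (Nat.cast_ne_zero.mpr hn), Complex.natCast_cpow_natCast_mul]
  exact_mod_cast ofReal_mul_cpow (pow_nonneg n.cast_nonneg p.natDegree) (p.reverse.eval (n : ℂ)⁻¹) s

lemma mul_eval_div_eval_cpow (a : ℕ → ℂ) (Q P : ℂ[X]) {n : ℕ} (hn : n ≠ 0) (s : ℂ) :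
    a n * Q.eval (n : ℂ) / P.eval (n : ℂ) ^ s =
      LSeries.term a (P.natDegree * s + -Q.natDegree) n *
        kernelAtInfinity Q P (s, (n : ℂ)⁻¹) := by
  have hn' : (n : ℂ) ≠ 0 := Nat.cast_ne_zero.mpr hn
  rw [eval_natCast_cpow P hn, eval_eq_pow_mul_eval_reverse Q hn', kernelAtInfinity,
    LSeries.term_of_ne_zero hn, Complex.cpow_add _ _ hn', Complex.cpow_neg, Complex.cpow_neg,
    Complex.cpow_natCast]
  field_simp

/-- The linear form on polynomials with moments `μ`, that is, with `X ^ k ↦ μ k`; over `ℂ`, it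
is the complex-polynomial version of `PsiPolyR`. -/
noncomputable def momentForm {R : Type*} [CommSemiring R] (μ : ℕ → R) : R[X] →ₗ[R] R :=
  lsum fun k => μ k • LinearMap.id

lemma momentForm_apply {R : Type*} [CommSemiring R] (μ : ℕ → R) (p : R[X]) :
    momentForm μ p = p.sum fun k c => c * μ k := by
  simp only [momentForm, lsum_apply, LinearMap.smul_apply, LinearMap.id_apply, smul_eq_mul,
    mul_comm]

lemma momentForm_monomial {R : Type*} [CommSemiring R] (μ : ℕ → R) (k : ℕ) (c : R) :
    momentForm μ (monomial k c) = c * μ k := by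
  rw [momentForm_apply]
  exact sum_monomial_index c _ (zero_mul _)

lemma sum_reverse {R S : Type*} [Semiring R] [AddCommMonoid S] (p : R[X]) (f : ℕ → R → S)
    (hf : ∀ k, f k 0 = 0) :
    p.reverse.sum f = p.sum fun k c => f (p.natDegree - k) c := by
  rw [p.sum_over_range fun _ => hf _, p.reverse.sum_over_range' hf (p.natDegree + 1)
    (Nat.lt_succ_of_le p.reverse_natDegree_le), ← Finset.sum_range_reflect]
  refine Finset.sum_congr rfl fun k hk => ?_
  have hk' : k ≤ p.natDegree := Nat.lt_succ_iff.mp (Finset.mem_range.mp hk)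
  rw [coeff_reverse, Nat.add_sub_cancel, revAt_le (Nat.sub_le _ _), Nat.sub_sub_self hk']

lemma reverse_pow_of_domain {R : Type*} [Semiring R] [NoZeroDivisors R] (p : R[X]) (k : ℕ) :
    (p ^ k).reverse = p.reverse ^ k := by
  induction k with
  | zero => simpa using reverse_C (1 : R)
  | succ k ih => rw [pow_succ, pow_succ, reverse_mul_of_domain, ih]

lemma kernelAtInfinity_neg_natCast (Q P : ℂ[X]) (k : ℕ) (u : ℂ) :
    kernelAtInfinity Q P (-(k : ℂ), u) = (Q * P ^ k).reverse.eval u := by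
  rw [kernelAtInfinity, reverse_mul_of_domain, reverse_pow_of_domain, eval_mul, eval_pow, neg_neg,
    Complex.cpow_natCast]

theorem apply_neg_natCast_eq_momentForm {a : ℕ → ℂ} {L : ℂ → ℂ} (hL : Differentiable ℂ L)
    (hLa : ∀ s, 1 < s.re → LSeriesHasSum a s (L s)) {Q P : ℂ[X]} (hP_deg : 0 < P.natDegree)
    (hP_lead : P.leadingCoeff ∈ Complex.slitPlane) (hP : ∀ n : ℕ, n ≠ 0 → P.eval (n : ℂ) ≠ 0)
    {F : ℂ → ℂ} (hF : Differentiable ℂ F) {σ : ℝ}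
    (hFs : ∀ s : ℂ, σ < s.re → F s = ∑' n : ℕ,
      a (n + 1) * Q.eval ((n + 1 : ℕ) : ℂ) / P.eval ((n + 1 : ℕ) : ℂ) ^ s) (k : ℕ) :
    F (-k) = momentForm (fun j => L (-j)) (Q * P ^ k) := by
  have hdeg_pos : (0 : ℝ) < P.natDegree := Nat.cast_pos.mpr hP_deg
  have hFs' (s : ℂ) (hs : σ < s.re) :
      F s = ∑' n : ℕ, LSeries.term a ((P.natDegree : ℝ) * s + -Q.natDegree) n *
        kernelAtInfinity Q P (s, (n : ℂ)⁻¹) := by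
    have hsupport : (fun n : ℕ => LSeries.term a (P.natDegree * s + -Q.natDegree) n *
        kernelAtInfinity Q P (s, (n : ℂ)⁻¹)).support ⊆ Set.range Nat.succ := fun n hn => by
      refine ⟨n.pred, Nat.succ_pred fun hn_zero => hn ?_⟩
      simp only [hn_zero, LSeries.term_zero, zero_mul]
    rw [hFs s hs, Complex.ofReal_natCast, ← Nat.succ_injective.tsum_eq hsupport]
    exact tsum_congr fun n => mul_eval_div_eval_cpow a Q P n.succ_ne_zero s
  rw [apply_eq_sum_of_forall_eq_polynomial_eval hL hLa (analyticAt_kernelAtInfinity_zero Q hP_lead)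
    (fun n hn => differentiable_kernelAtInfinity Q (Nat.cast_ne_zero.mpr hn) (hP n hn))
    hdeg_pos hF hFs' (kernelAtInfinity_neg_natCast Q P k),
    sum_reverse _ _ fun _ => zero_mul _, momentForm_apply]
  rcases eq_or_ne Q 0 with rfl | hQ
  · simp only [zero_mul, sum_zero_index]
  have hdeg : (Q * P ^ k).natDegree = Q.natDegree + k * P.natDegree := by
    rw [natDegree_mul hQ (pow_ne_zero k (ne_zero_of_natDegree_gt hP_deg)), natDegree_pow]
  refine Finset.sum_congr rfl fun j hj => ?_
  dsimp only
  rw [Nat.cast_sub (le_natDegree_of_mem_supp j hj), hdeg]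
  congr 2
  push_cast
  ring

end PolynomialSeries

section Translation

open Polynomial

lemma sum_range_succ_lseriesTerm_neg_natCast (a : ℕ → ℂ) (N k : ℕ) :
    ∑ n ∈ Finset.range (N + 1), LSeries.term a (-k) n = ∑ n ∈ Finset.Icc 1 N, a n * n ^ k := by
  rw [Finset.range_eq_Ico, Finset.sum_eq_sum_Ico_succ_bot N.succ_pos, LSeries.term_zero, zero_add,
    zero_add, Nat.succ_eq_add_one, Finset.Ico_add_one_right_eq_Icc]
  refine Finset.sum_congr rfl fun n hn => ?_
  rw [LSeries.term_of_ne_zero (Nat.one_le_iff_ne_zero.mp (Finset.mem_Icc.mp hn).1),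
    Complex.cpow_neg, Complex.cpow_natCast, div_inv_eq_mul]

lemma momentForm_X_add_C_pow_of_periodic {a : ℕ → ℂ} {L : ℂ → ℂ} (hL : Differentiable ℂ L)
    (hLa : ∀ s, 1 < s.re → LSeriesHasSum a s (L s)) {N : ℕ}
    (hper : ∀ n, 1 ≤ n → a (n + N) = a n) (k : ℕ) :
    momentForm (fun j => L (-j)) ((X + C (N : ℂ)) ^ k) =
      L (-k) - ∑ n ∈ Finset.Icc 1 N, a n * n ^ k := by
  have hF : Differentiable ℂ fun s => L s - ∑ n ∈ Finset.range (N + 1), LSeries.term a s n :=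
    hL.sub (Differentiable.fun_sum fun n _ => differentiable_lseriesTerm a n)
  have hFs (s : ℂ) (hs : 1 < s.re) :
      L s - ∑ n ∈ Finset.range (N + 1), LSeries.term a s n = ∑' n : ℕ, a (n + 1) *
        (1 : ℂ[X]).eval ((n + 1 : ℕ) : ℂ) / (X + C (N : ℂ)).eval ((n + 1 : ℕ) : ℂ) ^ s := by
    rw [← ((hasSum_nat_add_iff' (N + 1)).mpr (hLa s hs)).tsum_eq]
    refine tsum_congr fun n => ?_
    rw [LSeries.term_of_ne_zero (by lia), eval_one, mul_one, eval_add, eval_X, eval_C,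
      ← hper (n + 1) n.succ_pos, ← Nat.cast_add, add_right_comm, add_assoc]
  have hroots (n : ℕ) (hn : n ≠ 0) : (X + C (N : ℂ)).eval (n : ℂ) ≠ 0 := by
    rw [eval_add, eval_X, eval_C]
    exact_mod_cast (Nat.add_pos_left hn.bot_lt N).ne'
  have happly := apply_neg_natCast_eq_momentForm hL hLa
    ((natDegree_X_add_C (N : ℂ)).symm ▸ one_pos)
    ((monic_X_add_C (N : ℂ)).leadingCoeff.symm ▸ Complex.one_mem_slitPlane)
    hroots hF hFs k
  rw [← sum_range_succ_lseriesTerm_neg_natCast, happly, one_mul]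

end Translation

section Periodic

lemma sum_univ_zmod_of_periodic {M : Type*} [AddCommMonoid M] {N : ℕ} [NeZero N] {χ : ℕ → M}
    (hper : ∀ n, 1 ≤ n → χ (n + N) = χ n) :
    ∑ j : ZMod N, χ (j.val + N) = ∑ n ∈ Finset.Icc 1 N, χ n := by
  obtain ⟨m, rfl⟩ := Nat.exists_eq_succ_of_ne_zero (NeZero.ne N)
  calc ∑ j : ZMod (m + 1), χ (j.val + (m + 1))
    _ = ∑ i ∈ Finset.range (m + 1), χ (i + (m + 1)) :=
      Fin.sum_univ_eq_sum_range (fun i => χ (i + (m + 1))) (m + 1)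
    _ = ∑ i ∈ Finset.range m, χ (i + 1) + χ (m + 1) := by
      rw [Finset.sum_range_succ', zero_add]
      congr 1
      exact Finset.sum_congr rfl fun i _ => hper (i + 1) i.succ_pos
    _ = ∑ n ∈ Finset.Icc 1 (m + 1), χ n := by
      rw [← Finset.sum_range_succ (fun i => χ (i + 1)), ← Finset.Ico_add_one_right_eq_Icc,
        Finset.sum_Ico_eq_sum_range, Nat.add_sub_cancel]
      exact Finset.sum_congr rfl fun i _ => by rw [add_comm]

lemma exists_differentiable_LSeriesHasSum_of_periodic {N : ℕ} [NeZero N] {χ : ℕ → ℂ}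
    (hper : ∀ n, 1 ≤ n → χ (n + N) = χ n) (hsum : ∑ n ∈ Finset.Icc 1 N, χ n = 0) :
    ∃ L : ℂ → ℂ, Differentiable ℂ L ∧ ∀ s, 1 < s.re → LSeriesHasSum χ s (L s) := by
  let Φ : ZMod N → ℂ := fun j => χ (j.val + N)
  have hΦ {n : ℕ} (hn : n ≠ 0) : Φ n = χ n := by
    have hshift : Function.Periodic (fun m => χ (m + N)) N := fun m =>
      hper (m + N) (Nat.add_pos_right m (NeZero.pos N))
    simp only [Φ, ZMod.val_natCast]
    rw [hshift.map_mod_nat n, hper n (Nat.one_le_iff_ne_zero.mpr hn)]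
  refine ⟨ZMod.LFunction Φ, ZMod.differentiable_LFunction_of_sum_zero
    ((sum_univ_zmod_of_periodic hper).trans hsum), fun s hs => ?_⟩
  rw [← LSeriesHasSum_congr s _ hΦ, ZMod.LFunction_eq_LSeries Φ hs]
  exact (ZMod.LSeriesSummable_of_one_lt_re Φ hs).LSeriesHasSum

end Periodic

section GeneratingFunction

open PowerSeries
open scoped Nat

variable {K : Type*} [Field K]

/-- The exponential generating function `∑ₖ μ(k) tᵏ / k!` of `μ`. -/
noncomputable def expGenFun (μ : ℕ → K) : K⟦X⟧ :=
  mk fun k => μ k / k !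

lemma coeff_expGenFun (μ : ℕ → K) (k : ℕ) : coeff k (expGenFun μ) = μ k / k ! :=
  coeff_mk _ _

lemma coeff_rescale_exp [Algebra ℚ K] (c : K) (k : ℕ) :
    coeff k (rescale c (exp K)) = c ^ k / k ! := by
  rw [coeff_rescale, coeff_exp, map_div₀, map_one, map_natCast, mul_one_div]

lemma sum_C_mul_rescale_exp [Algebra ℚ K] {ι : Type*} (S : Finset ι) (w x : ι → K) :
    ∑ i ∈ S, C (w i) * rescale (x i) (exp K) = expGenFun fun k => ∑ i ∈ S, w i * x i ^ k := by
  ext k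
  simp only [map_sum, coeff_C_mul, coeff_rescale_exp, coeff_expGenFun, Finset.sum_div,
    mul_div_assoc]

lemma expGenFun_mul_rescale_exp [Algebra ℚ K] (μ : ℕ → K) (c : K) :
    expGenFun μ * rescale c (exp K) =
      expGenFun fun k => momentForm μ ((Polynomial.X + Polynomial.C c) ^ k) := by
  have := algebraRat.charZero K
  ext k
  rw [coeff_mul, coeff_expGenFun, (Commute.all _ _).add_pow', map_sum, Finset.sum_div]
  refine Finset.sum_congr rfl fun ⟨i, j⟩ hij => ?_
  obtain rfl : i + j = k := Finset.HasAntidiagonal.mem_antidiagonal.mp hij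
  have hmoment : momentForm μ (Polynomial.X ^ i * Polynomial.C c ^ j) = c ^ j * μ i := by
    rw [← Polynomial.C_pow, Polynomial.X_pow_mul_C, Polynomial.C_mul_X_pow_eq_monomial,
      momentForm_monomial]
  rw [map_nsmul, hmoment, nsmul_eq_mul, coeff_expGenFun, coeff_rescale_exp, Nat.cast_add_choose]
  have hfactorial (l : ℕ) : (l ! : K) ≠ 0 := Nat.cast_ne_zero.mpr l.factorial_ne_zero
  field_simp [hfactorial]

lemma momentForm_eq_neg_momentForm_derivative [CharZero K] {μ ν : ℕ → K}
    (h : X * expGenFun μ = -expGenFun ν) (p : Polynomial K) :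
    momentForm ν p = -momentForm μ (Polynomial.derivative p) := by
  have hzero : ν 0 = 0 := by
    simpa only [coeff_zero_X_mul, map_neg, coeff_expGenFun, Nat.factorial_zero, Nat.cast_one,
      div_one, zero_eq_neg] using congrArg (coeff 0) h
  have hsucc (k : ℕ) : ν (k + 1) = -((k + 1) * μ k) := by
    have hcoeff := congrArg (coeff (k + 1)) h
    rw [coeff_succ_X_mul, map_neg, coeff_expGenFun, coeff_expGenFun, Nat.factorial_succ] at hcoeff
    have hk : (k + 1 : K) ≠ 0 := Nat.cast_add_one_ne_zero k
    have hfactorial : (k ! : K) ≠ 0 := Nat.cast_ne_zero.mpr k.factorial_ne_zero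
    push_cast at hcoeff
    field_simp at hcoeff
    linear_combination hcoeff
  induction p using Polynomial.induction_on' with
  | add p q hp hq => rw [map_add, hp, hq, map_add, map_add, neg_add]
  | monomial k c =>
    rw [Polynomial.derivative_monomial, momentForm_monomial, momentForm_monomial]
    cases k with
    | zero => simp [hzero]
    | succ k => simp [hsucc, mul_assoc]

lemma X_mul_expGenFun_eq_neg_of_momentForm_X_add_C_pow [Algebra ℚ K] {μ ν ρ : ℕ → K} {c : K}
    (hc : c ≠ 0)
    (hμ : ∀ k, momentForm μ ((Polynomial.X + Polynomial.C c) ^ k) = μ k - ρ k)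
    (hν : X * expGenFun ρ = (1 - rescale c (exp K)) * -expGenFun ν) :
    X * expGenFun μ = -expGenFun ν := by
  have hne : 1 - rescale c (exp K) ≠ 0 := fun h => hc <| by
    simpa [coeff_rescale_exp, coeff_one] using congrArg (coeff 1) h
  have hρ : expGenFun ρ = (1 - rescale c (exp K)) * expGenFun μ := by
    rw [sub_mul, one_mul, mul_comm (rescale c (exp K)), expGenFun_mul_rescale_exp]
    ext k
    simp only [hμ, map_sub, coeff_expGenFun]
    ring
  refine mul_left_cancel₀ hne ?_
  rw [← hν, hρ]
  ring

end GeneratingFunction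

open Polynomial in
lemma psiPolyR_eq_momentForm (ψ : ℕ → ℂ) (Q : ℝ[X]) :
    PsiPolyR ψ Q = momentForm ψ (Q.map Complex.ofRealHom) := by
  rw [PsiPolyR, momentForm_apply, sum_def,
    support_map_of_injective Q Complex.ofRealHom.injective]
  exact Finset.sum_congr rfl fun k _ => by rw [coeff_map, Complex.ofRealHom_eq_coe]

theorem dirichlet_like_values_at_negative_integers_A_one_general
    {N : ℕ} (hN : 1 ≤ N) {χ : ℕ → ℂ} (hper : ∀ n, 1 ≤ n → χ (n + N) = χ n)
    (hsum : ∑ n ∈ Finset.Icc 1 N, χ n = 0) {ψ : ℕ → ℂ}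
    (hψ : PowerSeries.X * (∑ n ∈ Finset.Icc 1 N,
        PowerSeries.C (χ n) * PowerSeries.rescale (n : ℂ) (PowerSeries.exp ℂ)) =
      (1 - PowerSeries.rescale (N : ℂ) (PowerSeries.exp ℂ)) * -expGenFun ψ)
    {P : Polynomial ℂ} (hdeg : 0 < P.natDegree) (hlead : P.leadingCoeff ∈ Complex.slitPlane)
    (hP : ∀ n : ℕ, n ≠ 0 → P.eval (n : ℂ) ≠ 0)
    {F : ℂ → ℂ} (hF : Differentiable ℂ F) {σ : ℝ}
    (hFs : ∀ s : ℂ, σ < s.re → F s = ∑' n : ℕ,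
      χ (n + 1) * P.derivative.eval ((n + 1 : ℕ) : ℂ) / P.eval ((n + 1 : ℕ) : ℂ) ^ s)
    {m : ℕ} (hm : 0 < m) :
    F (1 - m) = -momentForm ψ (P ^ m) / m := by
  have : NeZero N := ⟨Nat.one_le_iff_ne_zero.mp hN⟩
  obtain ⟨L, hL, hLχ⟩ := exists_differentiable_LSeriesHasSum_of_periodic hper hsum
  have hmoments : PowerSeries.X * expGenFun (fun k => L (-k)) = -expGenFun ψ :=
    X_mul_expGenFun_eq_neg_of_momentForm_X_add_C_pow (NeZero.ne (N : ℂ))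
      (momentForm_X_add_C_pow_of_periodic hL hLχ hper) (by rwa [← sum_C_mul_rescale_exp])
  obtain ⟨k, rfl⟩ := Nat.exists_eq_add_one_of_ne_zero hm.ne'
  have hk : (k + 1 : ℂ) ≠ 0 := Nat.cast_add_one_ne_zero k
  calc F (1 - (k + 1 : ℕ))
    _ = F (-k) := by
      congr 1
      push_cast
      ring
    _ = momentForm (fun j => L (-j)) (P.derivative * P ^ k) :=
      apply_neg_natCast_eq_momentForm hL hLχ hdeg hlead hP hF hFs k
    _ = -momentForm ψ (P ^ (k + 1)) / (k + 1 : ℕ) := by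
      rw [momentForm_eq_neg_momentForm_derivative hmoments, neg_neg, Polynomial.derivative_pow_succ,
        mul_assoc, mul_comm (P ^ k), ← Polynomial.smul_eq_C_mul, map_smul, smul_eq_mul]
      push_cast
      field_simp

/-- If `Re(P(n)) > 0` for all `n ≥ 1` and `F` is entire with
`F(s) = Σ_{n=1}^∞ χ(n)·P'(n)/P(n)^s` for `Re(s) > 1`, then for every `m ≥ 1`,
`F(1-m) = -Ψ_χ(P^m)/m`. -/
theorem dirichlet_like_values_at_negative_integers_A_one
    (N : ℕ) (hN : 1 ≤ N) (χ : ℕ → ℂ)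
    (hper : ∀ n : ℕ, 1 ≤ n → χ (n + N) = χ n)
    (hsum : ∑ n ∈ Finset.Icc 1 N, χ n = 0)
    (ψ : ℕ → ℂ)
    (hψ : PowerSeries.X * (∑ n ∈ Finset.Icc 1 N,
        PowerSeries.C (χ n) * PowerSeries.rescale (n : ℂ) (PowerSeries.exp ℂ)) =
      (1 - PowerSeries.rescale (N : ℂ) (PowerSeries.exp ℂ)) *
        (- PowerSeries.mk fun m => ψ m / (m.factorial : ℂ)))
    (P : Polynomial ℝ) (d : ℕ) (hd : 1 ≤ d) (hdeg : P.natDegree = d)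
    (hlead : 0 < P.leadingCoeff)
    (hpos : ∀ n : ℕ, 1 ≤ n → 0 < P.eval (n : ℝ))
    (F : ℂ → ℂ) (hF : Differentiable ℂ F)
    (hFs : ∀ s : ℂ, 1 < s.re →
      F s = ∑' n : ℕ,
        χ (n + 1) * (Complex.ofReal ((Polynomial.derivative P).eval ((n + 1 : ℕ) : ℝ))) /
          (Complex.ofReal (P.eval ((n + 1 : ℕ) : ℝ))) ^ s) :
    ∀ m : ℕ, 0 < m →
      F (1 - (m : ℂ)) = -(PsiPolyR ψ (P ^ m)) / (m : ℂ) := by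
  intro m hm
  have heval (p : Polynomial ℝ) (n : ℕ) :
      (p.map Complex.ofRealHom).eval (n : ℂ) = p.eval (n : ℝ) := by
    simp
  rw [psiPolyR_eq_momentForm, Polynomial.map_pow]
  refine dirichlet_like_values_at_negative_integers_A_one_general hN hper hsum hψ
    (P := P.map Complex.ofRealHom) (σ := 1) ?_ ?_ (fun n hn => ?_) hF (fun s hs => ?_) hm
  · rwa [Polynomial.natDegree_map, hdeg]
  · rw [Polynomial.leadingCoeff_map]
    exact Complex.ofReal_mem_slitPlane.mpr hlead
  · rw [heval]
    exact Complex.ofReal_ne_zero.mpr (hpos n (Nat.one_le_iff_ne_zero.mpr hn)).ne'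
  · rw [hFs s hs]
    simp only [Polynomial.derivative_map, heval]
end

section
/- Let d ≥ 1 and a = (a_1,…,a_d) ∈ ℂ^d with a ≠ (0,…,0), and set δ = (2·max_j |a_j|)^{-1} > 0. For N ∈ ℕ, s = (s_1,…,s_d) ∈ ℂ^d and x ∈ [−δ, δ], define c_ℓ(s) = (−1)^ℓ · Σ_{α ∈ ℕ^d, |α| = ℓ} a^α · Π_{j=1}^d binom(−s_j, α_j) and ρ_N(x; s) = (−1)^{N+1}·(N+1) · Σ_{α ∈ ℕ^d, |α| = N+1} a^α · Π_{j=1}^d binom(−s_j, α_j) · ∫_0^1 (1−t)^N · Π_{j=1}^d (1 − t·x·a_j)^{−s_j−α_j} dt. Then for any N ∈ ℕ, any s ∈ ℂ^d and any x ∈ [−δ, δ], one has Π_{j=1}^d (1 − x·a_j)^{−s_j} = Σ_{ℓ=0}^N c_ℓ(s)·x^ℓ + x^{N+1}·ρ_N(x; s). -/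
/-- Generalized binomial coefficient `binom(z,k) = z(z-1)⋯(z-k+1)/k!` for `z ∈ ℂ`, `k ∈ ℕ`. -/
noncomputable def cbinom (z : ℂ) (k : ℕ) : ℂ :=
  (∏ i ∈ Finset.range k, (z - (i : ℂ))) / (k.factorial : ℂ)

/-- The Taylor coefficient
`c_ℓ(s) = (-1)^ℓ Σ_{|α|=ℓ} a^α Π_j binom(-s_j, α_j)`. -/
noncomputable def taylorC (d : ℕ) (a : Fin d → ℂ) (ℓ : ℕ) (s : Fin d → ℂ) : ℂ :=
  (-1) ^ ℓ * ∑ α ∈ Finset.Nat.antidiagonalTuple d ℓ,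
    (∏ j, a j ^ α j) * ∏ j, cbinom (-(s j)) (α j)

/-- The remainder
`ρ_N(x;s) = (-1)^{N+1}(N+1) Σ_{|α|=N+1} a^α (Π_j binom(-s_j,α_j))
  ∫_0^1 (1-t)^N Π_j (1-t·x·a_j)^{-s_j-α_j} dt`. -/
noncomputable def taylorRho (d : ℕ) (a : Fin d → ℂ) (N : ℕ) (x : ℝ) (s : Fin d → ℂ) : ℂ :=
  (-1) ^ (N + 1) * (N + 1) * ∑ α ∈ Finset.Nat.antidiagonalTuple d (N + 1),
    (∏ j, a j ^ α j) * (∏ j, cbinom (-(s j)) (α j)) *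
      ∫ t in (0:ℝ)..1,
        ((1 - t) ^ N : ℝ) • ∏ j, (1 - (t : ℂ) * (x : ℂ) * a j) ^ (-(s j) - (α j : ℂ))

/-!
Record a function near a point by the power series of its divided derivatives `f⁽ⁿ⁾ / n!`.
Differentiating these coefficients in the base point is the same as applying the formal derivative
`d⁄dX`. Both operations obey the Leibniz rule, so this compatibility passes from the factors
`w ↦ (1 - w * a j) ^ (-s j)` to their product, where multiplication of power series produces the
sums over multi-indices. Taylor's formula with integral remainder along the segment from `0` to `x`
then applies; the bases of the powers stay in the slit plane because it is star-shaped about `1`.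
-/

open Finset PowerSeries
open scoped Nat Interval

/-- `U t` is thought of as the Taylor series of `f = constantCoeff ∘ U` with base point `t`, that
is, its `n`-th coefficient is the divided derivative `f⁽ⁿ⁾(t) / n!`. The family `U` is a *Taylor
family at `t`* if the coefficients vary with the base point accordingly. The base point may live in
a smaller field than the values, so that a family can be restricted to a real segment. -/
def IsTaylorFamilyAt (𝕜 : Type*) {A : Type*} [NontriviallyNormedField 𝕜] [NormedCommRing A]
    [NormedAlgebra 𝕜 A] (U : 𝕜 → A⟦X⟧) (t : 𝕜) : Prop :=
  ∀ n, HasDerivAt (fun y ↦ coeff n (U y)) (coeff n (d⁄dX A (U t))) t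

namespace IsTaylorFamilyAt

section Algebra

variable {𝕜 A : Type*} [NontriviallyNormedField 𝕜] [NormedCommRing A] [NormedAlgebra 𝕜 A]
  {U V : 𝕜 → A⟦X⟧} {t : 𝕜}

theorem one : IsTaylorFamilyAt 𝕜 (fun _ ↦ (1 : A⟦X⟧)) t := fun n ↦ by
  simpa using hasDerivAt_const t (coeff n (1 : A⟦X⟧))

theorem mul (hU : IsTaylorFamilyAt 𝕜 U t) (hV : IsTaylorFamilyAt 𝕜 V t) :
    IsTaylorFamilyAt 𝕜 (fun y ↦ U y * V y) t := fun n ↦ by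
  simp only [coeff_mul]
  refine (HasDerivAt.fun_sum fun p _ ↦ (hU p.1).fun_mul (hV p.2)).congr_deriv ?_
  rw [Derivation.leibniz, map_add, smul_eq_mul, smul_eq_mul, mul_comm (V t), coeff_mul, coeff_mul,
    ← sum_add_distrib]
  exact sum_congr rfl fun p _ ↦ add_comm _ _

theorem prod {ι : Type*} {S : Finset ι} {U : ι → 𝕜 → A⟦X⟧}
    (hU : ∀ i ∈ S, IsTaylorFamilyAt 𝕜 (U i) t) :
    IsTaylorFamilyAt 𝕜 (fun y ↦ ∏ i ∈ S, U i y) t := by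
  induction S using Finset.cons_induction with
  | empty => simpa using one
  | cons i S hi ih =>
    simp only [prod_cons]
    exact (hU i (mem_cons_self i S)).mul (ih fun j hj ↦ hU j (mem_cons_of_mem hj))

theorem rescale_comp {𝕂 : Type*} [NontriviallyNormedField 𝕂] [NormedAlgebra 𝕜 𝕂]
    {U : 𝕂 → 𝕂⟦X⟧} {g : 𝕜 → 𝕂} {b : 𝕂} (hU : IsTaylorFamilyAt 𝕂 U (g t)) (hg : HasDerivAt g b t) :
    IsTaylorFamilyAt 𝕜 (fun y ↦ rescale b (U (g y))) t := fun n ↦ by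
  simp only [coeff_rescale, coeff_derivative]
  refine (((hU n).comp t hg).const_mul (b ^ n)).congr_deriv ?_
  rw [coeff_derivative]
  ring

theorem iteratedDerivWithin_constantCoeff {s : Set 𝕜} (hs : UniqueDiffOn 𝕜 s)
    (hU : ∀ t ∈ s, IsTaylorFamilyAt 𝕜 U t) (n : ℕ) (ht : t ∈ s) :
    iteratedDerivWithin n (fun y ↦ constantCoeff (U y)) s t = n ! • coeff n (U t) := by
  induction n generalizing t with
  | zero => simp
  | succ n ih =>
    rw [iteratedDerivWithin_succ, derivWithin_congr (fun y hy ↦ ih hy) (ih ht),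
      ((hU t ht n).hasDerivWithinAt.fun_const_smul n !).derivWithin (hs t ht), coeff_derivative,
      Nat.factorial_succ, nsmul_eq_mul, nsmul_eq_mul]
    push_cast
    ring

theorem contDiffOn_constantCoeff {s : Set 𝕜} (hs : UniqueDiffOn 𝕜 s)
    (hU : ∀ t ∈ s, IsTaylorFamilyAt 𝕜 U t) (n : ℕ∞) :
    ContDiffOn 𝕜 n (fun t ↦ constantCoeff (U t)) s :=
  contDiffOn_of_differentiableOn_deriv fun m _ ↦ DifferentiableOn.congr
    (fun t ht ↦ ((hU t ht m).fun_const_smul m !).differentiableAt.differentiableWithinAt)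
    fun _ ↦ iteratedDerivWithin_constantCoeff hs hU m

end Algebra

section IntegralRemainder

theorem constantCoeff_eq_sum_add_integral {A : Type*} [NormedCommRing A] [NormedAlgebra ℝ A]
    [CompleteSpace A] {U : ℝ → A⟦X⟧} {a b : ℝ} (hU : ∀ t ∈ [[a, b]], IsTaylorFamilyAt ℝ U t)
    (N : ℕ) :
    constantCoeff (U b) = ∑ n ∈ range (N + 1), (b - a) ^ n • coeff n (U a) +
      ∫ t in a..b, ((N + 1) * (b - t) ^ N) • coeff (N + 1) (U t) := by
  obtain rfl | hab := eq_or_ne a b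
  · simp [sum_range_succ']
  have hs : UniqueDiffOn ℝ [[a, b]] := uniqueDiffOn_uIcc hab
  have taylor := taylor_integral_remainder (n := N) (contDiffOn_constantCoeff hs hU (N + 1 : ℕ))
  have polynomial_eq : taylorWithinEval (fun t ↦ constantCoeff (U t)) N [[a, b]] a b =
      ∑ n ∈ range (N + 1), (b - a) ^ n • coeff n (U a) := by
    rw [taylor_within_apply]
    refine sum_congr rfl fun n _ ↦ ?_
    rw [iteratedDerivWithin_constantCoeff hs hU n Set.left_mem_uIcc,
      ← Nat.cast_smul_eq_nsmul ℝ, smul_smul]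
    congr 1
    field_simp
  have remainder_eq : ∫ t in a..b, ((b - t) ^ N / N !) •
        iteratedDerivWithin (N + 1) (fun t ↦ constantCoeff (U t)) [[a, b]] t =
      ∫ t in a..b, ((N + 1) * (b - t) ^ N) • coeff (N + 1) (U t) := by
    refine intervalIntegral.integral_congr fun t ht ↦ ?_
    simp only [iteratedDerivWithin_constantCoeff hs hU (N + 1) ht]
    rw [← Nat.cast_smul_eq_nsmul ℝ, smul_smul, Nat.factorial_succ]
    congr 1
    push_cast
    field_simp
  rw [← polynomial_eq, ← remainder_eq, ← taylor, add_sub_cancel]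

theorem constantCoeff_add_eq_sum_add_integral {𝕂 : Type*} [NontriviallyNormedField 𝕂]
    [NormedAlgebra ℝ 𝕂] [CompleteSpace 𝕂] {U : 𝕂 → 𝕂⟦X⟧} {z h : 𝕂}
    (hU : ∀ t ∈ Set.Icc (0 : ℝ) 1, IsTaylorFamilyAt 𝕂 U (z + t • h)) (N : ℕ) :
    constantCoeff (U (z + h)) = ∑ n ∈ range (N + 1), coeff n (U z) * h ^ n +
      h ^ (N + 1) * ((N + 1) *
        ∫ t in (0 : ℝ)..1, (1 - t) ^ N • coeff (N + 1) (U (z + t • h))) := by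
  have hasDerivAt_segment (t : ℝ) : HasDerivAt (fun y : ℝ ↦ z + y • h) h t := by
    simpa using ((hasDerivAt_id t).smul_const h).const_add z
  have hV : ∀ t ∈ [[(0 : ℝ), 1]], IsTaylorFamilyAt ℝ (fun y ↦ rescale h (U (z + y • h))) t := by
    rw [Set.uIcc_of_le zero_le_one]
    exact fun t ht ↦ rescale_comp (g := fun y ↦ z + y • h) (hU t ht) (hasDerivAt_segment t)
  have taylor := constantCoeff_eq_sum_add_integral hV N
  simp only [← coeff_zero_eq_constantCoeff_apply, coeff_rescale] at taylor ⊢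
  simp only [pow_zero, one_mul, one_smul, zero_smul, add_zero, sub_zero, one_pow] at taylor
  rw [taylor, ← mul_assoc, ← intervalIntegral.integral_const_mul]
  congr 1
  · exact sum_congr rfl fun n _ ↦ mul_comm _ _
  · refine intervalIntegral.integral_congr fun t _ ↦ ?_
    simp only [Algebra.smul_def]
    push_cast
    ring

end IntegralRemainder

end IsTaylorFamilyAt

theorem cbinom_mul_sub (z : ℂ) (k : ℕ) : cbinom z k * (z - k) = cbinom z (k + 1) * (k + 1) := by
  have factorial_ne_zero : (k ! : ℂ) ≠ 0 := by exact_mod_cast k.factorial_ne_zero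
  have succ_ne_zero : (k + 1 : ℂ) ≠ 0 := k.cast_add_one_ne_zero
  rw [cbinom, cbinom, prod_range_succ, Nat.factorial_succ]
  push_cast
  field_simp

/-- The Taylor series of the principal power `w ↦ w ^ z` with base point `w`, in the increment. -/
noncomputable def cpowTaylorSeries (z w : ℂ) : ℂ⟦X⟧ :=
  .mk fun k ↦ cbinom z k * w ^ (z - k)

theorem isTaylorFamilyAt_cpowTaylorSeries (z : ℂ) {w : ℂ} (hw : w ∈ Complex.slitPlane) :
    IsTaylorFamilyAt ℂ (cpowTaylorSeries z) w := fun n ↦ by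
  simp only [cpowTaylorSeries, coeff_derivative, coeff_mk]
  refine (((hasDerivAt_id' w).cpow_const hw).const_mul (cbinom z n)).congr_deriv ?_
  rw [Nat.cast_succ, ← sub_sub]
  linear_combination w ^ (z - n - 1) * cbinom_mul_sub z n

theorem coeff_prod_univ_fin {R : Type*} [CommSemiring R] {d : ℕ} (f : Fin d → R⟦X⟧) (n : ℕ) :
    coeff n (∏ j, f j) = ∑ α ∈ Nat.antidiagonalTuple d n, ∏ j, coeff (α j) (f j) := by
  rw [coeff_prod]
  exact sum_equiv Finsupp.equivFunOnFinite (by simp [Nat.mem_antidiagonalTuple]) (by simp)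

/-- The Taylor series of `w ↦ ∏ j, (1 - w * a j) ^ (-s j)` with base point `w`, in the
increment. -/
noncomputable def prodCpowTaylorSeries {ι : Type*} [Fintype ι] (a s : ι → ℂ) (w : ℂ) : ℂ⟦X⟧ :=
  ∏ j, rescale (-a j) (cpowTaylorSeries (-s j) (1 - w * a j))

theorem isTaylorFamilyAt_prodCpowTaylorSeries {ι : Type*} [Fintype ι] {a : ι → ℂ} (s : ι → ℂ)
    {w : ℂ} (hw : ∀ j, 1 - w * a j ∈ Complex.slitPlane) :
    IsTaylorFamilyAt ℂ (prodCpowTaylorSeries a s) w := by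
  refine IsTaylorFamilyAt.prod fun j _ ↦ IsTaylorFamilyAt.rescale_comp
    (g := fun y ↦ 1 - y * a j) (isTaylorFamilyAt_cpowTaylorSeries (-s j) (hw j)) ?_
  simpa using ((hasDerivAt_id w).mul_const (a j)).const_sub 1

theorem constantCoeff_prodCpowTaylorSeries {ι : Type*} [Fintype ι] (a s : ι → ℂ) (w : ℂ) :
    constantCoeff (prodCpowTaylorSeries a s w) = ∏ j, (1 - w * a j) ^ (-s j) := by
  simp only [prodCpowTaylorSeries, map_prod, ← coeff_zero_eq_constantCoeff_apply, coeff_rescale]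
  simp [cpowTaylorSeries, cbinom]

theorem coeff_prodCpowTaylorSeries {d : ℕ} (a s : Fin d → ℂ) (w : ℂ) (n : ℕ) :
    coeff n (prodCpowTaylorSeries a s w) =
      (-1) ^ n * ∑ α ∈ Nat.antidiagonalTuple d n,
        (∏ j, a j ^ α j) * (∏ j, cbinom (-s j) (α j)) * ∏ j, (1 - w * a j) ^ (-s j - α j) := by
  rw [prodCpowTaylorSeries, coeff_prod_univ_fin, mul_sum]
  refine sum_congr rfl fun α hα ↦ ?_
  rw [← Nat.mem_antidiagonalTuple.mp hα, ← prod_pow_eq_pow_sum]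
  simp only [← prod_mul_distrib, coeff_rescale, cpowTaylorSeries, coeff_mk]
  exact prod_congr rfl fun j _ ↦ by rw [neg_pow]; ring

theorem coeff_prodCpowTaylorSeries_zero {d : ℕ} (a s : Fin d → ℂ) (n : ℕ) :
    coeff n (prodCpowTaylorSeries a s 0) = taylorC d a n s := by
  simp [coeff_prodCpowTaylorSeries, taylorC]

/-- The remainder `taylorRho` for a complex argument `x`; at a real `x` the two agree by `rfl`. -/
noncomputable def complexTaylorRho (d : ℕ) (a : Fin d → ℂ) (N : ℕ) (x : ℂ) (s : Fin d → ℂ) : ℂ :=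
  (-1) ^ (N + 1) * (N + 1) * ∑ α ∈ Nat.antidiagonalTuple d (N + 1),
    (∏ j, a j ^ α j) * (∏ j, cbinom (-(s j)) (α j)) *
      ∫ t in (0 : ℝ)..1,
        ((1 - t) ^ N : ℝ) • ∏ j, (1 - (t : ℂ) * x * a j) ^ (-(s j) - (α j : ℂ))

theorem one_sub_ofReal_mul_mem_slitPlane {z : ℂ} (hz : 1 - z ∈ Complex.slitPlane) {t : ℝ}
    (ht : t ∈ Set.Icc (0 : ℝ) 1) : 1 - t * z ∈ Complex.slitPlane := by
  have := Complex.starConvex_one_slitPlane.add_smul_mem (y := -z) (by rwa [← sub_eq_add_neg])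
    ht.1 ht.2
  rwa [smul_neg, ← sub_eq_add_neg, Complex.real_smul] at this

section Expansion

variable {d : ℕ} {a : Fin d → ℂ} {x : ℂ}

theorem complexTaylorRho_eq_integral (hx : ∀ j, 1 - x * a j ∈ Complex.slitPlane) (s : Fin d → ℂ)
    (N : ℕ) :
    complexTaylorRho d a N x s = (N + 1) * ∫ t in (0 : ℝ)..1,
      (1 - t) ^ N • coeff (N + 1) (prodCpowTaylorSeries a s (t • x)) := by
  have integrable (α : Fin d → ℕ) : IntervalIntegrable (fun t : ℝ ↦ ((1 - t) ^ N : ℝ) •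
      ∏ j, (1 - (t : ℂ) * x * a j) ^ (-(s j) - (α j : ℂ))) MeasureTheory.volume 0 1 := by
    have base_mem (j : Fin d) (t : ℝ) (ht : t ∈ Set.Icc (0 : ℝ) 1) :
        1 - t * x * a j ∈ Complex.slitPlane := by
      simpa only [mul_assoc] using one_sub_ofReal_mul_mem_slitPlane (hx j) ht
    refine ContinuousOn.intervalIntegrable_of_Icc zero_le_one (ContinuousOn.fun_smul ?_ ?_)
    · fun_prop
    · exact continuousOn_finsetProd _ fun j _ ↦
        ContinuousOn.cpow_const (by fun_prop) (base_mem j)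
  simp only [coeff_prodCpowTaylorSeries, Complex.real_smul (z := x), ← mul_smul_comm, smul_sum]
  rw [intervalIntegral.integral_const_mul,
    intervalIntegral.integral_finsetSum fun α _ ↦ (integrable α).const_mul _]
  simp only [intervalIntegral.integral_const_mul]
  rw [complexTaylorRho]
  ring

theorem taylor_expansion_with_remainder_general (hx : ∀ j, 1 - x * a j ∈ Complex.slitPlane)
    (N : ℕ) (s : Fin d → ℂ) :
    ∏ j, (1 - x * a j) ^ (-(s j)) =
      (∑ ℓ ∈ Finset.range (N + 1), taylorC d a ℓ s * x ^ ℓ) +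
        x ^ (N + 1) * complexTaylorRho d a N x s := by
  have isTaylorFamilyAt_segment : ∀ t ∈ Set.Icc (0 : ℝ) 1,
      IsTaylorFamilyAt ℂ (prodCpowTaylorSeries a s) (0 + t • x) := fun t ht ↦
    isTaylorFamilyAt_prodCpowTaylorSeries s fun j ↦ by
      simpa [mul_assoc] using one_sub_ofReal_mul_mem_slitPlane (hx j) ht
  have taylor := IsTaylorFamilyAt.constantCoeff_add_eq_sum_add_integral isTaylorFamilyAt_segment N
  simpa only [zero_add, constantCoeff_prodCpowTaylorSeries,
    coeff_prodCpowTaylorSeries_zero, ← complexTaylorRho_eq_integral hx] using taylor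

end Expansion

theorem abs_mul_norm_le_half {ι : Type*} [Finite ι] {a : ι → ℂ} {x : ℝ}
    (hx : |x| ≤ (2 * ⨆ j, ‖a j‖)⁻¹) (j : ι) : |x| * ‖a j‖ ≤ 1 / 2 := by
  have norm_le : ‖a j‖ ≤ ⨆ j, ‖a j‖ := le_ciSup (Set.finite_range fun j ↦ ‖a j‖).bddAbove j
  calc |x| * ‖a j‖ ≤ (2 * ⨆ j, ‖a j‖)⁻¹ * ⨆ j, ‖a j‖ := by gcongr; exact (abs_nonneg x).trans hx
    _ = (⨆ j, ‖a j‖)⁻¹ * (⨆ j, ‖a j‖) / 2 := by rw [mul_inv]; ring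
    _ ≤ 1 / 2 := by gcongr; exact inv_mul_le_one

theorem one_sub_mul_mem_slitPlane {ι : Type*} [Finite ι] {a : ι → ℂ} {x : ℝ}
    (hx : |x| ≤ (2 * ⨆ j, ‖a j‖)⁻¹) (j : ι) : 1 - x * a j ∈ Complex.slitPlane := by
  rw [sub_eq_add_neg]
  refine Complex.mem_slitPlane_of_norm_lt_one ?_
  calc ‖-(x * a j)‖ = |x| * ‖a j‖ := by simp
    _ ≤ 1 / 2 := abs_mul_norm_le_half hx j
    _ < 1 := one_half_lt_one

/-- the Taylor expansion with remainder
`Π_j (1-x·a_j)^{-s_j} = Σ_{ℓ=0}^N c_ℓ(s) x^ℓ + x^{N+1} ρ_N(x;s)`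
for `x ∈ [-δ,δ]` with `δ = (2·max_j |a_j|)⁻¹`. -/
theorem taylor_expansion_with_remainder
    (d : ℕ) (hd : 1 ≤ d) (a : Fin d → ℂ) (ha : a ≠ 0)
    (δ : ℝ) (hδ : δ = (2 * ⨆ j, ‖a j‖)⁻¹)
    (N : ℕ) (s : Fin d → ℂ) (x : ℝ) (hx : x ∈ Set.Icc (-δ) δ) :
    ∏ j, (1 - (x : ℂ) * a j) ^ (-(s j)) =
      (∑ ℓ ∈ Finset.range (N + 1), taylorC d a ℓ s * (x : ℂ) ^ ℓ) +
        (x : ℂ) ^ (N + 1) * taylorRho d a N x s :=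
  taylor_expansion_with_remainder_general
    (one_sub_mul_mem_slitPlane (hδ ▸ abs_le.mpr hx)) N s
end

section
/- Let d ≥ 1, a = (a_1,…,a_d) ∈ ℂ^d, ℓ ∈ ℕ, and s ∈ ℂ with s ≠ 1. For each j ∈ {1,…,d}, let f_j(s) = (s_1,…,s_d) ∈ ℂ^d where s_j = s and s_k = s − 1 for k ≠ j, and let c_ℓ(s_1,…,s_d) = (−1)^ℓ · Σ_{α ∈ ℕ^d, |α| = ℓ} a^α · Π_{k=1}^d binom(−s_k, α_k). Then Σ_{j=1}^d c_ℓ(f_j(s)) = (−1)^ℓ · Σ_{α ∈ ℕ^d, |α| = ℓ} a^α · (Π_{k=1}^d binom(−s+1, α_k)) · (ds − d + ℓ)/(s − 1). -/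
theorem mul_cbinom_sub_one (z : ℂ) (k : ℕ) :
    z * cbinom (z - 1) k = (z - k) * cbinom z k := by
  have h_prod : z * ∏ i ∈ Finset.range k, (z - 1 - (i : ℂ)) =
      (z - k) * ∏ i ∈ Finset.range k, (z - (i : ℂ)) := by
    rw [mul_comm (z - k), ← Finset.prod_range_succ, Finset.prod_range_succ', mul_comm]
    simp only [Nat.cast_add, Nat.cast_one, Nat.cast_zero, sub_zero, sub_sub, add_comm]
  simp only [cbinom, ← mul_div_assoc, h_prod]

theorem mul_cbinom_neg_add_one (z : ℂ) (k : ℕ) :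
    z * cbinom (-(z + 1)) k = (z + k) * cbinom (-z) k := by
  rw [neg_add']
  linear_combination -mul_cbinom_sub_one (-z) k

theorem mul_prod_cbinom_neg_ite_add_one {ι : Type*} [Fintype ι] [DecidableEq ι]
    (x : ι → ℂ) (α : ι → ℕ) (j : ι) :
    x j * ∏ k, cbinom (-(if k = j then x k + 1 else x k)) (α k) =
      (x j + α j) * ∏ k, cbinom (-x k) (α k) := by
  have h_ne : ∀ k ∈ ({j}ᶜ : Finset ι),
      cbinom (-(if k = j then x k + 1 else x k)) (α k) = cbinom (-x k) (α k) := by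
    intro k hk
    rw [if_neg (by simpa using hk)]
  rw [Fintype.prod_eq_mul_prod_compl j, Fintype.prod_eq_mul_prod_compl j, if_pos rfl,
    Finset.prod_congr rfl h_ne, ← mul_assoc, ← mul_assoc, mul_cbinom_neg_add_one]

/- The shift at `j`, weighted by `x j`, multiplies the `α`-term by `x j + α j`; summed over `j`,
this factor depends on `α` only through `|α| = ℓ`, so it comes out of the sum over `α`. -/
theorem sum_taylorC_eval_general {d : ℕ} (a : Fin d → ℂ) (ℓ : ℕ) (x : Fin d → ℂ) :
    ∑ j, x j * taylorC d a ℓ (fun k => if k = j then x k + 1 else x k) =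
      (∑ j, x j + ℓ) * taylorC d a ℓ x := by
  simp_rw [taylorC, mul_left_comm _ ((-1 : ℂ) ^ ℓ), ← Finset.mul_sum, Finset.mul_sum _ _ (x _)]
  rw [Finset.sum_comm, Finset.mul_sum _ _ (_ + _)]
  congr 1
  refine Finset.sum_congr rfl fun α hα => ?_
  have h_degree : ∑ j, (α j : ℂ) = ℓ := mod_cast Finset.Nat.mem_antidiagonalTuple.mp hα
  simp_rw [mul_left_comm _ (∏ k, a k ^ α k), mul_prod_cbinom_neg_ite_add_one]
  rw [← Finset.mul_sum, ← Finset.sum_mul, Finset.sum_add_distrib, h_degree]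

/-- with `f_j(s) = (s_1,…,s_d)` where `s_j = s` and `s_k = s-1` for `k ≠ j`,
`Σ_{j=1}^d c_ℓ(f_j(s)) = (-1)^ℓ Σ_{|α|=ℓ} a^α (Π_k binom(-s+1, α_k)) (ds-d+ℓ)/(s-1)`. -/
theorem sum_taylorC_eval
    (d : ℕ) (hd : 1 ≤ d) (a : Fin d → ℂ) (ℓ : ℕ) (s : ℂ) (hs : s ≠ 1) :
    ∑ j, taylorC d a ℓ (fun k => if k = j then s else s - 1) =
      (-1) ^ ℓ * ∑ α ∈ Finset.Nat.antidiagonalTuple d ℓ,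
        (∏ k, a k ^ α k) * (∏ k, cbinom (-s + 1) (α k)) *
          (((d : ℂ) * s - (d : ℂ) + (ℓ : ℂ)) / (s - 1)) := by
  rw [← Finset.sum_mul, ← mul_assoc, ← mul_div_assoc, eq_div_iff (sub_ne_zero.mpr hs)]
  simpa [taylorC, ← Finset.mul_sum, mul_sub_one, neg_add_eq_sub, mul_comm] using
    sum_taylorC_eval_general a ℓ fun _ => s - 1
end

section
/- Let d ≥ 1, a = (a_1,…,a_d) ∈ ℂ^d with a ≠ (0,…,0), set δ = (2·max_j |a_j|)^{-1}, let m be a positive integer, and set N = d·m. For each j ∈ {1,…,d}, let f_j(1−m) = (s_1,…,s_d) ∈ ℂ^d where s_j = 1−m and s_k = −m for k ≠ j. Then for every j ∈ {1,…,d} and every x ∈ [−δ, δ], one has ρ_N(x; f_j(1−m)) = 0. (Indeed, for every α ∈ ℕ^d with |α| = N+1, either α_j > m−1 or there exists k ≠ j with α_k > m, so every generalized binomial coefficient appearing in the sum vanishes.) -/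
lemma cbinom_natCast (n k : ℕ) : cbinom n k = n.choose k := by
  rw [cbinom, ← descPochhammer_eval_eq_prod_range, Nat.cast_choose_eq_descPochhammer_div]

lemma prod_choose_eq_zero_of_sum_lt {ι : Type*} {t : Finset ι} {n α : ι → ℕ}
    (h : ∑ i ∈ t, n i < ∑ i ∈ t, α i) : ∏ i ∈ t, (n i).choose (α i) = 0 := by
  obtain ⟨i, hi, hlt⟩ := Finset.exists_lt_of_sum_lt h
  exact Finset.prod_eq_zero hi (Nat.choose_eq_zero_of_lt hlt)

lemma prod_cbinom_natCast_eq_zero_of_sum_lt {ι : Type*} {t : Finset ι} {n α : ι → ℕ}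
    (h : ∑ i ∈ t, n i < ∑ i ∈ t, α i) : ∏ i ∈ t, cbinom (n i) (α i) = 0 := by
  simp_rw [cbinom_natCast]
  exact_mod_cast prod_choose_eq_zero_of_sum_lt h

lemma sum_ite_pred_le_card_mul {ι : Type*} (t : Finset ι) (p : ι → Prop) [DecidablePred p]
    (m : ℕ) : ∑ i ∈ t, (if p i then m - 1 else m) ≤ t.card * m :=
  Finset.sum_le_card_nsmul t _ m fun i _ => by split_ifs <;> lia

theorem taylorRho_vanishes_at_negative_integers_general
    {d : ℕ} (a : Fin d → ℂ) {N : ℕ} (x : ℝ) {n : Fin d → ℕ} (hn : ∑ k, n k ≤ N) :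
    taylorRho d a N x (fun k => -(n k : ℂ)) = 0 := by
  refine mul_eq_zero_of_right _ (Finset.sum_eq_zero fun α hα => ?_)
  have hlt : ∑ k, n k < ∑ k, α k := by
    rw [Finset.Nat.mem_antidiagonalTuple.mp hα]
    exact Nat.lt_succ_of_le hn
  simp only [neg_neg, prod_cbinom_natCast_eq_zero_of_sum_lt hlt, mul_zero, zero_mul]

/-- with `N = d·m` and `f_j(1-m) = (s_1,…,s_d)` where `s_j = 1-m` and
`s_k = -m` for `k ≠ j`, the remainder `ρ_N(x; f_j(1-m))` vanishes for every
`x ∈ [-δ,δ]` and every `j`. -/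
theorem taylorRho_vanishes_at_negative_integers
    (d : ℕ) (hd : 1 ≤ d) (a : Fin d → ℂ) (ha : a ≠ 0)
    (δ : ℝ) (hδ : δ = (2 * ⨆ j, ‖a j‖)⁻¹)
    (m : ℕ) (hm : 0 < m) (j : Fin d) (x : ℝ) (hx : x ∈ Set.Icc (-δ) δ) :
    taylorRho d a (d * m) x (fun k => if k = j then 1 - (m : ℂ) else -(m : ℂ)) = 0 := by
  simpa [apply_ite, Nat.cast_pred hm] using taylorRho_vanishes_at_negative_integers_general a x
    ((sum_ite_pred_le_card_mul Finset.univ (· = j) m).trans_eq (by rw [Finset.card_fin]))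
end

section
/- Let F : ℂ → ℂ be holomorphic on ℂ with F(s) = Σ_{n=1}^∞ χ(n)·n^{−s} for all s with Re(s) > 1 (such an F exists since χ has zero sum over a period). Then for every positive integer m, F(1−m) = −Ψ_χ(X^m)/m. -/
/-!
Writing `χ` as a function on `ℤ/N` gives `L(s) = N ^ (-s) ∑ χ(n) ζ(s, n / N)`, the sum being over
`1 ≤ n ≤ N`. The formula `ζ(-k, x) = -B_{k+1}(x) / (k + 1)` turns this into
`L(1 - m) = -B_{m,χ} / m`, where `B_{m,χ}` is a generalized Bernoulli number, and the generating
function of the Bernoulli polynomials identifies `B_{m,χ}` with `Ψ_χ(X ^ m)`. By the identity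
theorem, `F = L` away from `1`.

The case `k = 0` needs a separate argument: the functional equation expresses `ζ(0, x)` through the
conditionally convergent series `∑ e(± n x) / n`. Its value `-log (1 - e(± x))` is found by
integrating the Bose-Einstein kernel, and `arg (1 - e(x))` equals `π (x - 1 / 2)` for `0 < x < 1`.
-/

section

open Complex Filter Finset HurwitzZeta MeasureTheory Set Topology
open scoped Nat Real

section ExpZeta

lemma re_lt_one_of_norm_le_one {w : ℂ} (hw : ‖w‖ ≤ 1) (hw1 : w ≠ 1) : w.re < 1 := by
  refine ((re_le_norm w).trans hw).lt_of_ne fun hre ↦ hw1 (Complex.ext hre ?_)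
  have hsq : w.re ^ 2 + w.im ^ 2 ≤ 1 := by
    calc w.re ^ 2 + w.im ^ 2 = ‖w‖ ^ 2 := by rw [Complex.sq_norm, normSq_apply]; ring
      _ ≤ 1 := pow_le_one₀ (norm_nonneg w) hw
  simpa [hre] using hsq

lemma one_sub_mul_exp_neg_mem_slitPlane {z : ℂ} (hz : ‖z‖ ≤ 1) (hz1 : z ≠ 1) {t : ℝ}
    (ht : 0 ≤ t) : 1 - z * rexp (-t) ∈ slitPlane := by
  have hexp : rexp (-t) ≤ 1 := Real.exp_le_one_iff.mpr (neg_nonpos.mpr ht)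
  refine Or.inl ?_
  have := re_lt_one_of_norm_le_one hz hz1
  rw [sub_re, one_re, re_mul_ofReal]
  nlinarith [Real.exp_pos (-t)]

/-- The Bose-Einstein kernel `1 / (z⁻¹ e ^ t - 1)`, whose Mellin transform at `s` is `Γ(s)` times
the polylogarithm `∑ zⁿ / nˢ`. -/
noncomputable def boseEinsteinKernel (z : ℂ) (t : ℝ) : ℂ :=
  z * rexp (-t) / (1 - z * rexp (-t))

lemma hasSum_boseEinsteinKernel {z : ℂ} (hz : ‖z‖ ≤ 1) {t : ℝ} (ht : 0 < t) :
    HasSum (fun n : ℕ ↦ z ^ (n + 1) * rexp (-(n + 1) * t)) (boseEinsteinKernel z t) := by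
  have hlt : ‖z * rexp (-t)‖ < 1 := by
    rw [norm_mul, norm_real, Real.norm_of_nonneg (Real.exp_pos _).le]
    have : rexp (-t) < 1 := Real.exp_lt_one_iff.mpr (neg_lt_zero.mpr ht)
    nlinarith [Real.exp_pos (-t)]
  convert! (hasSum_geometric_of_norm_lt_one hlt).mul_left (z * rexp (-t)) using 2 with n
  rw [← pow_succ', mul_pow, ← ofReal_pow, ← Real.exp_nat_mul]
  congr 3
  push_cast
  ring

lemma continuousOn_boseEinsteinKernel {z : ℂ} (hz : ‖z‖ ≤ 1) (hz1 : z ≠ 1) :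
    ContinuousOn (boseEinsteinKernel z) (Ici 0) :=
  ContinuousOn.div (by fun_prop) (by fun_prop) fun _ ht ↦
    slitPlane_ne_zero (one_sub_mul_exp_neg_mem_slitPlane hz hz1 ht)

lemma tendsto_one_sub_mul_exp_neg (z : ℂ) :
    Tendsto (fun t : ℝ ↦ 1 - z * rexp (-t)) atTop (𝓝 1) := by
  have hexp : Tendsto (fun t : ℝ ↦ (rexp (-t) : ℂ)) atTop (𝓝 0) := by
    exact_mod_cast (continuous_ofReal.tendsto 0).comp Real.tendsto_exp_neg_atTop_nhds_zero
  simpa only [mul_zero, sub_zero] using (hexp.const_mul z).const_sub 1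

lemma boseEinsteinKernel_isBigO_atTop (z : ℂ) :
    boseEinsteinKernel z =O[atTop] fun t ↦ rexp (-1 * t) := by
  have hinv : (fun t : ℝ ↦ (1 - z * rexp (-t))⁻¹) =O[atTop] fun _ ↦ (1 : ℝ) :=
    ((tendsto_one_sub_mul_exp_neg z).inv₀ one_ne_zero).isBigO_one ℝ
  have hexp : (fun t : ℝ ↦ z * rexp (-t)) =O[atTop] fun t ↦ rexp (-1 * t) :=
    .const_mul_left (.of_norm_le fun t ↦ by simp [norm_exp]) z
  simpa only [boseEinsteinKernel, div_eq_mul_inv, mul_one] using! hexp.mul hinv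

lemma boseEinsteinKernel_isBigO_nhdsGT_zero {z : ℂ} (hz : ‖z‖ ≤ 1) (hz1 : z ≠ 1) :
    boseEinsteinKernel z =O[𝓝[>] 0] fun t : ℝ ↦ t ^ (-(0 : ℝ)) := by
  have hcont := (continuousOn_boseEinsteinKernel hz hz1 0 self_mem_Ici).mono Ioi_subset_Ici_self
  simpa using hcont.tendsto.isBigO_one ℝ

lemma locallyIntegrableOn_boseEinsteinKernel {z : ℂ} (hz : ‖z‖ ≤ 1) (hz1 : z ≠ 1) :
    LocallyIntegrableOn (boseEinsteinKernel z) (Ioi 0) :=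
  ((continuousOn_boseEinsteinKernel hz hz1).mono Ioi_subset_Ici_self).locallyIntegrableOn
    measurableSet_Ioi

lemma mellinConvergent_boseEinsteinKernel {z : ℂ} (hz : ‖z‖ ≤ 1) (hz1 : z ≠ 1) {s : ℂ}
    (hs : 0 < s.re) : MellinConvergent (boseEinsteinKernel z) s :=
  mellinConvergent_of_isBigO_rpow_exp one_pos (locallyIntegrableOn_boseEinsteinKernel hz hz1)
    (boseEinsteinKernel_isBigO_atTop z) (boseEinsteinKernel_isBigO_nhdsGT_zero hz hz1) hs

lemma differentiableAt_mellin_boseEinsteinKernel {z : ℂ} (hz : ‖z‖ ≤ 1) (hz1 : z ≠ 1) {s : ℂ}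
    (hs : 0 < s.re) : DifferentiableAt ℂ (mellin (boseEinsteinKernel z)) s :=
  mellin_differentiableAt_of_isBigO_rpow_exp one_pos
    (locallyIntegrableOn_boseEinsteinKernel hz hz1)
    (boseEinsteinKernel_isBigO_atTop z) (boseEinsteinKernel_isBigO_nhdsGT_zero hz hz1) hs

lemma hasSum_mellin_boseEinsteinKernel {z : ℂ} (hz : ‖z‖ ≤ 1) {s : ℂ} (hs : 1 < s.re) :
    HasSum (fun n : ℕ ↦ Gamma s * z ^ (n + 1) / (n + 1 : ℝ) ^ s)
      (mellin (boseEinsteinKernel z) s) := by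
  refine hasSum_mellin (fun n ↦ .inr n.cast_add_one_pos) (one_pos.trans hs)
    (fun t ht ↦ hasSum_boseEinsteinKernel hz ht) ?_
  have hzeta := (summable_nat_add_iff 1).mpr (Real.summable_one_div_nat_rpow.mpr hs)
  refine Summable.of_nonneg_of_le (fun n ↦ by positivity) (fun n ↦ ?_) hzeta
  push_cast
  gcongr
  exact norm_pow z (n + 1) ▸ pow_le_one₀ (norm_nonneg z) hz

lemma mellin_boseEinsteinKernel_exp (x : ℝ) {s : ℂ} (hs : 1 < s.re) :
    mellin (boseEinsteinKernel (cexp (2 * π * I * x))) s = Gamma s * expZeta x s := by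
  have hnorm : ‖cexp (2 * π * I * x)‖ ≤ 1 := by simp [norm_exp]
  have hs0 : s ≠ 0 := ne_zero_of_one_lt_re hs
  have hzeta := ((hasSum_nat_add_iff' 1).mpr (hasSum_expZeta_of_one_lt_re x hs)).mul_left (Gamma s)
  refine (hasSum_mellin_boseEinsteinKernel hnorm hs).unique ?_
  convert! hzeta using 1
  · ext n
    rw [← Complex.exp_nat_mul]
    push_cast
    ring_nf
  · simp [hs0]

lemma mellin_boseEinsteinKernel_one {z : ℂ} (hz : ‖z‖ ≤ 1) (hz1 : z ≠ 1) :
    mellin (boseEinsteinKernel z) 1 = -log (1 - z) := by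
  have hderiv (t : ℝ) (ht : t ∈ Set.Ici (0 : ℝ)) :
      HasDerivAt (fun t : ℝ ↦ log (1 - z * rexp (-t))) (boseEinsteinKernel z t) t := by
    have hexp : HasDerivAt (fun t : ℝ ↦ rexp (-t)) (-rexp (-t)) t := by
      simpa using (hasDerivAt_neg t).exp
    convert! ((hexp.ofReal_comp.const_mul z).const_sub 1).clog_real
      (one_sub_mul_exp_neg_mem_slitPlane hz hz1 ht) using 1
    simp [boseEinsteinKernel]
  have hint : IntegrableOn (boseEinsteinKernel z) (Ioi 0) := by
    simpa [MellinConvergent] using mellinConvergent_boseEinsteinKernel hz hz1 (s := 1) (by simp)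
  have hlim : Tendsto (fun t : ℝ ↦ log (1 - z * rexp (-t))) atTop (𝓝 0) := by
    simpa using (tendsto_one_sub_mul_exp_neg z).clog one_mem_slitPlane
  calc mellin (boseEinsteinKernel z) 1 = ∫ t in Ioi 0, boseEinsteinKernel z t := by simp [mellin]
    _ = 0 - log (1 - z * rexp (-0)) := integral_Ioi_of_hasDerivAt_of_tendsto' hderiv hint hlim
    _ = -log (1 - z) := by simp

lemma exp_two_pi_I_mul_eq_one_iff {x : ℝ} :
    cexp (2 * π * I * x) = 1 ↔ (x : UnitAddCircle) = 0 := by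
  simp only [Complex.exp_eq_one_iff, AddCircle.coe_eq_zero_iff, zsmul_one]
  refine exists_congr fun n ↦ ?_
  rw [mul_comm, mul_left_inj' two_pi_I_ne_zero, eq_comm]
  exact_mod_cast Iff.rfl

theorem expZeta_one {x : ℝ} (hx : (x : UnitAddCircle) ≠ 0) :
    expZeta x 1 = -log (1 - cexp (2 * π * I * x)) := by
  have hnorm : ‖cexp (2 * π * I * x)‖ ≤ 1 := by simp [norm_exp]
  have hne : cexp (2 * π * I * x) ≠ 1 := exp_two_pi_I_mul_eq_one_iff.not.mpr hx
  have hcast : Tendsto (fun σ : ℝ ↦ (σ : ℂ)) (𝓝[>] 1) (𝓝 1) :=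
    (continuous_ofReal.tendsto 1).mono_left nhdsWithin_le_nhds
  have hmellin := (differentiableAt_mellin_boseEinsteinKernel hnorm hne
    (s := 1) (by simp)).continuousAt.tendsto.comp hcast
  have hzeta := ((differentiableAt_Gamma_one.mul
    (differentiableAt_expZeta x 1 (.inr hx))).continuousAt).tendsto.comp hcast
  have heq : (mellin (boseEinsteinKernel (cexp (2 * π * I * x))) ∘ fun σ : ℝ ↦ (σ : ℂ))
      =ᶠ[𝓝[>] 1] (Gamma * expZeta x) ∘ fun σ : ℝ ↦ (σ : ℂ) := by
    filter_upwards [self_mem_nhdsWithin] with σ hσ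
    exact mellin_boseEinsteinKernel_exp x (by simpa using hσ)
  have hlim := tendsto_nhds_unique_of_eventuallyEq hmellin hzeta heq
  rw [← mellin_boseEinsteinKernel_one hnorm hne, hlim, Pi.mul_apply, Gamma_one, one_mul]

lemma arg_one_sub_exp_two_pi_I_mul {x : ℝ} (hx : x ∈ Ioo (0 : ℝ) 1) :
    arg (1 - cexp (2 * π * I * x)) = π * (x - 1 / 2) := by
  have hsin : 0 < 2 * Real.sin (π * x) :=
    mul_pos two_pos (Real.sin_pos_of_pos_of_lt_pi (mul_pos Real.pi_pos hx.1)
      (mul_lt_of_lt_one_right Real.pi_pos hx.2))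
  have hpolar : 1 - cexp (2 * π * I * x) = (2 * Real.sin (π * x) : ℝ) *
      (Complex.cos (π * (x - 1 / 2) : ℝ) + Complex.sin (π * (x - 1 / 2) : ℝ) * I) := by
    have hangle : ((π * (x - 1 / 2) : ℝ) : ℂ) = π * x - π / 2 := by push_cast; ring
    rw [hangle, Complex.cos_sub_pi_div_two, Complex.sin_sub_pi_div_two,
      show 2 * π * I * x = (2 * (π * x) : ℂ) * I by ring, exp_mul_I, Complex.cos_two_mul,
      Complex.sin_two_mul]
    push_cast
    linear_combination (-2) * Complex.sin_sq_add_cos_sq (π * x)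
  rw [hpolar, arg_mul_cos_add_sin_mul_I hsin]
  constructor <;> nlinarith [Real.pi_pos, hx.1, hx.2]

theorem hurwitzZeta_apply_zero {x : ℝ} (hx : x ∈ Ioc (0 : ℝ) 1) :
    hurwitzZeta x 0 = 1 / 2 - x := by
  obtain rfl | hx1 := hx.2.eq_or_lt
  · rw [AddCircle.coe_period, hurwitzZeta_zero, riemannZeta_zero]
    norm_num
  have hx0 : (x : UnitAddCircle) ≠ 0 :=
    (AddCircle.coe_eq_zero_iff_of_mem_Ico ⟨hx.1.le, hx1⟩).not.mpr hx.1.ne'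
  have harg := arg_one_sub_exp_two_pi_I_mul ⟨hx.1, hx1⟩
  set w : ℂ := 1 - cexp (2 * π * I * x) with hw
  have hconj : 1 - cexp (2 * π * I * (-x : ℝ)) = (starRingEnd ℂ) w := by
    simp [hw, ← exp_conj, conj_ofNat]
  have hlog_conj : log ((starRingEnd ℂ) w) = (starRingEnd ℂ) (log w) :=
    log_conj w (by rw [harg]; nlinarith [Real.pi_pos])
  have hlog_sub : log w - (starRingEnd ℂ) (log w) = 2 * (π * (x - 1 / 2)) * I := by
    rw [sub_conj, log_im, harg]
    push_cast
    ring
  have hfun := hurwitzZeta_one_sub (x : UnitAddCircle) (s := 1)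
    (fun n ↦ by exact_mod_cast (show (1 : ℤ) ≠ -n by omega)) (.inl hx0)
  rw [← AddCircle.coe_neg, expZeta_one hx0, expZeta_one (by simpa using hx0), hconj, hlog_conj,
    sub_self, mul_one, mul_one, Gamma_one, cpow_neg_one, mul_one,
    show -π * I / 2 = -π / 2 * I by ring, show π * I / 2 = π / 2 * I by ring,
    exp_neg_pi_div_two_mul_I, exp_pi_div_two_mul_I] at hfun
  rw [hfun]
  have hpi : (π : ℂ) ≠ 0 := ofReal_ne_zero.mpr Real.pi_ne_zero
  field_simp
  linear_combination I * hlog_sub + 2 * π * (x - 1 / 2) * I_sq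

end ExpZeta

theorem hurwitzZeta_neg_nat_eq_bernoulli {x : ℝ} (hx : x ∈ Set.Ioc (0 : ℝ) 1) (k : ℕ) :
    hurwitzZeta x (-k) = -Polynomial.aeval (x : ℂ) (Polynomial.bernoulli (k + 1)) / (k + 1) := by
  obtain rfl | hk := eq_or_ne k 0
  · simp [hurwitzZeta_apply_zero hx, Polynomial.bernoulli_one]
  · rw [hurwitzZeta_neg_nat hk (Ioc_subset_Icc_self hx), Polynomial.aeval_def,
      Polynomial.eval_map]
    ring

/-- The generalized Bernoulli number `B_{m,χ} = N ^ (m - 1) ∑ χ(n) B_m(n / N)`, the sum being over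
`1 ≤ n ≤ N`. The exponent is an integer, so that `B_{0,χ}` is the mean of `χ` over a period. -/
noncomputable def generalizedBernoulli {K : Type*} [Field K] [CharZero K] (N : ℕ) (χ : ℕ → K)
    (m : ℕ) : K :=
  (N : K) ^ (m - 1 : ℤ) *
    ∑ n ∈ Finset.Icc 1 N, χ n * Polynomial.aeval (n / N : K) (Polynomial.bernoulli m)

section GeneratingFunction

open PowerSeries

variable {K : Type*} [Field K] [CharZero K] {N : ℕ}

lemma mk_generalizedBernoulli (hN : N ≠ 0) (χ : ℕ → K) :
    mk (fun m ↦ generalizedBernoulli N χ m / m !) = C (N : K)⁻¹ * ∑ n ∈ Finset.Icc 1 N, C (χ n) *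
      rescale (N : K) (mk fun m ↦
        Polynomial.aeval (n / N : K) ((1 / m ! : ℚ) • Polynomial.bernoulli m)) := by
  have hN' : (N : K) ≠ 0 := Nat.cast_ne_zero.mpr hN
  ext m
  simp only [generalizedBernoulli, coeff_mk, coeff_C_mul, map_sum, coeff_rescale,
    zpow_sub₀ hN', zpow_natCast, zpow_one, Algebra.smul_def, mul_sum, sum_div]
  refine sum_congr rfl fun n _ ↦ ?_
  simp only [Polynomial.algebraMap_eq, one_div, map_mul, Polynomial.aeval_C, map_inv₀,
    map_natCast]
  ring

theorem generalizedBernoulli_generating_function (hN : N ≠ 0) (χ : ℕ → K) :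
    mk (fun m ↦ generalizedBernoulli N χ m / m !) * (rescale (N : K) (exp K) - 1) =
      X * ∑ n ∈ Finset.Icc 1 N, C (χ n) * rescale (n : K) (exp K) := by
  have hN' : (N : K) ≠ 0 := Nat.cast_ne_zero.mpr hN
  have hbernoulli (n : ℕ) :
      rescale (N : K) (mk fun m ↦
          Polynomial.aeval (n / N : K) ((1 / m ! : ℚ) • Polynomial.bernoulli m)) *
        (rescale (N : K) (exp K) - 1) = C (N : K) * X * rescale (n : K) (exp K) := by
    have := congrArg (rescale (N : K)) (Polynomial.bernoulli_generating_function (n / N : K))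
    simpa only [map_mul, map_sub, map_one, rescale_X, rescale_rescale, div_mul_cancel₀ _ hN']
      using this
  rw [mk_generalizedBernoulli hN, mul_assoc, sum_mul, mul_sum, mul_sum]
  refine sum_congr rfl fun n _ ↦ ?_
  have hC : C (N : K)⁻¹ * C (N : K) = 1 := by rw [← map_mul, inv_mul_cancel₀ hN', map_one]
  rw [mul_assoc, hbernoulli]
  linear_combination C (χ n) * X * rescale (n : K) (exp K) * hC

lemma rescale_exp_ne_one {a : K} (ha : a ≠ 0) : rescale a (exp K) ≠ 1 := fun h ↦ ha <| by
  simpa [coeff_rescale, coeff_exp, coeff_one] using congrArg (coeff 1) h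

theorem eq_generalizedBernoulli_of_generating_function (hN : N ≠ 0) {χ ψ : ℕ → K}
    (hψ : X * ∑ n ∈ Finset.Icc 1 N, C (χ n) * rescale (n : K) (exp K) =
      (1 - rescale (N : K) (exp K)) * (-PowerSeries.mk fun m ↦ ψ m / m !)) :
    ψ = generalizedBernoulli N χ := by
  have hne : rescale (N : K) (exp K) - 1 ≠ 0 :=
    sub_ne_zero.mpr (rescale_exp_ne_one (Nat.cast_ne_zero.mpr hN))
  have hmk : mk (fun m ↦ ψ m / m !) = mk (fun m ↦ generalizedBernoulli N χ m / m !) := by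
    refine mul_right_cancel₀ hne ?_
    rw [generalizedBernoulli_generating_function hN, hψ]
    ring
  ext m
  have hcoeff := congrArg (coeff m) hmk
  rw [coeff_mk, coeff_mk] at hcoeff
  exact (div_left_inj' (Nat.cast_ne_zero.mpr m.factorial_ne_zero)).mp hcoeff

end GeneratingFunction

section Periodic

variable {N : ℕ} [NeZero N]

lemma sum_zmod_eq_sum_Icc {M : Type*} [AddCommMonoid M] (f : ZMod N → M) :
    ∑ j, f j = ∑ n ∈ Finset.Icc 1 N, f n := by
  have hinj : Set.InjOn (fun n : ℕ ↦ (n : ZMod N)) (Finset.Icc 1 N) := by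
    intro a ha b hb hab
    obtain ⟨ha1, haN⟩ := Finset.mem_Icc.mp ha
    obtain ⟨hb1, hbN⟩ := Finset.mem_Icc.mp hb
    refine Nat.ModEq.eq_of_abs_lt ((ZMod.natCast_eq_natCast_iff a b N).mp hab) ?_
    rw [abs_lt]
    omega
  have hsurj : Set.SurjOn (fun n : ℕ ↦ (n : ZMod N)) (Finset.Icc 1 N)
      (Finset.univ : Finset (ZMod N)) :=
    surjOn_of_injOn_of_card_le _ (by simp [Set.MapsTo]) hinj (by simp [ZMod.card])
  exact (sum_nbij _ (fun _ _ ↦ Finset.mem_univ _) hinj hsurj fun _ _ ↦ rfl).symm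

lemma exists_zmod_eq_of_periodic {M : Type*} {χ : ℕ → M} (hper : ∀ n, 1 ≤ n → χ (n + N) = χ n) :
    ∃ Φ : ZMod N → M, ∀ n : ℕ, 1 ≤ n → Φ n = χ n := by
  refine ⟨fun j ↦ χ (j.val + N), fun n hn ↦ ?_⟩
  have hshift : Function.Periodic (fun n ↦ χ (n + N)) N := fun n ↦
    hper (n + N) (Nat.le_add_left_of_le NeZero.one_le)
  change χ ((n : ZMod N).val + N) = χ n
  rw [← hper n hn, ZMod.val_natCast]
  exact hshift.map_mod_nat n

theorem LFunction_neg_nat (Φ : ZMod N → ℂ) (k : ℕ) :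
    ZMod.LFunction Φ (-k) = -generalizedBernoulli N (fun n ↦ Φ n) (k + 1) / (k + 1) := by
  have hhurwitz (n : ℕ) (hn : n ∈ Finset.Icc 1 N) :
      hurwitzZeta (ZMod.toAddCircle (n : ZMod N)) (-k) =
        -Polynomial.aeval (n / N : ℂ) (Polynomial.bernoulli (k + 1)) / (k + 1) := by
    obtain ⟨hn1, hnN⟩ := Finset.mem_Icc.mp hn
    have hmem : (n / N : ℝ) ∈ Set.Ioc (0 : ℝ) 1 :=
      ⟨by have := NeZero.pos N; positivity, div_le_one_of_le₀ (mod_cast hnN) N.cast_nonneg⟩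
    rw [ZMod.toAddCircle_natCast, hurwitzZeta_neg_nat_eq_bernoulli hmem]
    push_cast
    rfl
  rw [ZMod.LFunction, sum_zmod_eq_sum_Icc, neg_neg, cpow_natCast, generalizedBernoulli,
    Finset.sum_congr rfl fun n hn ↦ by rw [hhurwitz n hn]]
  simp only [Nat.cast_add, Nat.cast_one, add_sub_cancel_right, zpow_natCast]
  rw [neg_div, mul_div_assoc, sum_div, ← mul_neg, ← sum_neg_distrib]
  simp only [mul_div_assoc, neg_div, mul_neg]

lemma LSeries_eq_tsum_nat_add_one (f : ℕ → ℂ) (s : ℂ) :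
    LSeries f s = ∑' n : ℕ, f (n + 1) * ((n + 1 : ℕ) : ℂ) ^ (-s) := by
  have hsupp : Function.support (LSeries.term f s) ⊆ Set.range Nat.succ := fun n hn ↦
    ⟨n - 1, Nat.succ_pred_eq_of_ne_zero (by rintro rfl; simp at hn)⟩
  rw [LSeries, ← Nat.succ_injective.tsum_eq hsupp]
  refine tsum_congr fun n ↦ ?_
  rw [LSeries.term_of_ne_zero n.succ_ne_zero, cpow_neg, div_eq_mul_inv]

theorem eqOn_LFunction_of_eq_LSeries {Φ : ZMod N → ℂ} {F : ℂ → ℂ}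
    (hF : DifferentiableOn ℂ F {1}ᶜ) (hFs : ∀ s : ℂ, 1 < s.re → F s = LSeries (Φ ·) s) :
    EqOn F (ZMod.LFunction Φ) {1}ᶜ := by
  have hconn : IsPreconnected ({1}ᶜ : Set ℂ) :=
    (isConnected_compl_singleton_of_one_lt_rank (by simp) 1).isPreconnected
  have hL : DifferentiableOn ℂ (ZMod.LFunction Φ) {1}ᶜ := fun s hs ↦
    (ZMod.differentiableAt_LFunction Φ s (.inl hs)).differentiableWithinAt
  have hnhds : {s : ℂ | 1 < s.re} ∈ 𝓝 2 :=
    (isOpen_lt continuous_const continuous_re).mem_nhds (by simp)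
  refine (hF.analyticOnNhd isOpen_compl_singleton).eqOn_of_preconnected_of_eventuallyEq
    (hL.analyticOnNhd isOpen_compl_singleton) hconn (z₀ := 2) (by simp) ?_
  filter_upwards [hnhds] with s hs
  rw [hFs s hs, ZMod.LFunction_eq_LSeries Φ hs]

end Periodic

end

theorem L_chi_values_at_negative_integers_general
    (N : ℕ) (hN : 1 ≤ N) (χ : ℕ → ℂ)
    (hper : ∀ n : ℕ, 1 ≤ n → χ (n + N) = χ n)
    (ψ : ℕ → ℂ)
    (hψ : PowerSeries.X * (∑ n ∈ Finset.Icc 1 N,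
        PowerSeries.C (χ n) * PowerSeries.rescale (n : ℂ) (PowerSeries.exp ℂ)) =
      (1 - PowerSeries.rescale (N : ℂ) (PowerSeries.exp ℂ)) *
        (- PowerSeries.mk fun m => ψ m / (m.factorial : ℂ)))
    (F : ℂ → ℂ) (hF : DifferentiableOn ℂ F {1}ᶜ)
    (hFs : ∀ s : ℂ, 1 < s.re →
      F s = ∑' n : ℕ, χ (n + 1) * (((n + 1 : ℕ)) : ℂ) ^ (-s)) :
    ∀ m : ℕ, 0 < m → F (1 - (m : ℂ)) = -(ψ m) / (m : ℂ) := by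
  intro m hm
  obtain ⟨k, rfl⟩ := Nat.exists_eq_add_one.mpr hm
  have : NeZero N := ⟨Nat.one_le_iff_ne_zero.mp hN⟩
  obtain ⟨Φ, hΦ⟩ := exists_zmod_eq_of_periodic hper
  have hLSeries (s : ℂ) (hs : 1 < s.re) : F s = LSeries (Φ ·) s := by
    rw [hFs s hs, LSeries_eq_tsum_nat_add_one]
    exact tsum_congr fun n ↦ by rw [hΦ _ n.succ_pos]
  have hB : generalizedBernoulli N (fun n ↦ Φ n) = generalizedBernoulli N χ := by
    ext m
    exact congrArg _ (Finset.sum_congr rfl fun n hn ↦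
      congrArg (· * _) (hΦ n (Finset.mem_Icc.mp hn).1))
  have hne : (-k : ℂ) ≠ 1 := by exact_mod_cast (show -(k : ℤ) ≠ 1 by omega)
  rw [eq_generalizedBernoulli_of_generating_function (NeZero.ne N) hψ, ← hB, Nat.cast_add_one,
    sub_add_cancel_right, eqOn_LFunction_of_eq_LSeries hF hLSeries hne, LFunction_neg_nat]

/-- if `F` is entire and agrees with `L_χ(s) = Σ_{n=1}^∞ χ(n)·n^{-s}` for
`Re(s) > 1`, then `F(1-m) = -Ψ_χ(X^m)/m` for every `m ≥ 1`, where `ψ m = Ψ_χ(X^m)` is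
characterized by `t·(Σ_{n=1}^N χ(n)e^{nt})/(1-e^{Nt}) = -Σ_m ψ(m) t^m/m!`. -/
theorem L_chi_values_at_negative_integers
    (N : ℕ) (hN : 1 ≤ N) (χ : ℕ → ℂ)
    (hper : ∀ n : ℕ, 1 ≤ n → χ (n + N) = χ n)
    (hsum : ∑ n ∈ Finset.Icc 1 N, χ n = 0)
    (ψ : ℕ → ℂ)
    (hψ : PowerSeries.X * (∑ n ∈ Finset.Icc 1 N,
        PowerSeries.C (χ n) * PowerSeries.rescale (n : ℂ) (PowerSeries.exp ℂ)) =
      (1 - PowerSeries.rescale (N : ℂ) (PowerSeries.exp ℂ)) *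
        (- PowerSeries.mk fun m => ψ m / (m.factorial : ℂ)))
    (F : ℂ → ℂ) (hF : Differentiable ℂ F)
    (hFs : ∀ s : ℂ, 1 < s.re →
      F s = ∑' n : ℕ, χ (n + 1) * (((n + 1 : ℕ)) : ℂ) ^ (-s)) :
    ∀ m : ℕ, 0 < m → F (1 - (m : ℂ)) = -(ψ m) / (m : ℂ) :=
  L_chi_values_at_negative_integers_general N hN χ hper ψ hψ F hF.differentiableOn hFs
end
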